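/- arXiv:2507.19221 — 2 statements merged into one kernel-verified Lean document; each statement's English description precedes it below -/
import Mathlib

section
/- Let d ≥ 1, let t > 1, set θ = (t−1)/t, let ν₁ ∈ P₂(ℝ^d), and let ν₀ ∈ P₂(ℝ^d) be absolutely continuous with respect to Lebesgue measure. Let ρ_E be a metric extrapolation of (ν₀, ν₁) at time t, and let ρ_F be a forward projection of ν₀ above μ, where μ := D^{1/θ}_#ν₁. Then there exists a constant-speed minimizing geodesic γ̃ : [0,t] → P₂(ℝ^d) such that γ̃(0) = ν₀, γ̃(1) = D^θ_#ρ_F and γ̃(t) = ρ_E; moreover, any constant-speed minimizing geodesic γ' : [0,t] → P₂(ℝ^d) with γ'(0) = ν₀ and γ'(t) = ρ_E coincides with γ̃ on all of [0,t]. -/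
/-!
Write `m₂` for the second moment and `corr(α, β)` for the largest value of `∫ ⟪x, y⟫` over couplings
of `α` and `β`, so that `W₂²(α, β) = m₂(α) + m₂(β) - 2 corr(α, β)`. Put `μ = D^{1/θ}_# ν₁` and
`σ = D^{1/(t-1)}_# ρE`. In the variable `τ = D^{1/(t-1)}_# ρ` the extrapolation functional is an
increasing affine function of `G(τ) = m₂(τ) / 2 + corr(τ, ν₀) - corr(τ, μ)` (`potential`), so `σ`
minimizes `G`. Two consequences are drawn from this.

* Comparing `σ` with its dilations gives `m₂(σ) + corr(σ, ν₀) = corr(σ, μ)` (`potential_eq`).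
* Let `h` be a finite maximum of affine functions, with a measurable selection `w` of subgradients.
  Comparing `σ` with its perturbations in the direction of `w` (`perturb`) and letting the size of
  the perturbation tend to zero, by compactness of the set of couplings (`coupling_compact`), gives
  an optimal coupling of `ν₀` and `σ` whose sum has a law `ρ` with `∫ h dμ ≤ ∫ h dρ`. As `ν₀` is
  absolutely continuous, there is only one optimal coupling (`unique_opt`: its support is monotone,
  and a monotone set has almost everywhere at most one point in each fibre), so that `ρ` does not
  depend on `h`. Finite maxima of affine functions determine the convex order, hence
  `μ ⪯ law(X + Z)` for the optimal coupling `(X, Z)` of `ν₀` and `σ` (`le_law_add`).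

The functional `corr(·, σ)` is monotone in the convex order (`corr_mono`), because an optimal
coupling is carried by the subdifferential of a convex function, a supremum of Rockafellar chains.
Suppose now that `μ ⪯ ρ`, and glue optimal couplings `(X, Y)` of `ν₀`, `ρ` and `(Y, Z)` of `ρ`, `σ`.
Then `∫ ⟪Y - X, Z⟫ ≥ corr(ρ, σ) - corr(ν₀, σ) ≥ corr(μ, σ) - corr(ν₀, σ) = m₂(σ)`, whence
`W₂²(ν₀, ρ) ≥ m₂(σ)`, with equality only if `Y = X + Z`. As `law(X + Z)` is admissible and at squared
distance at most `m₂(σ)`, the forward projection is `ρF = law(X + Z)` for an optimal coupling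
`(X, Z)` of `ν₀` and `σ` (`forward_eq`).

The geodesic is the displacement interpolation from `X` to `(t - 1) Z`, which has law `ρE`; at time
`1` it is `(1 - 1 / t) X + ((t - 1) / t) Z = θ (X + Z)`. It is the only one because equality in the
triangle inequality forces every geodesic with these endpoints to be the interpolation along an
optimal coupling, and there is only one of these (`geodesic_unique`).
-/

open MeasureTheory

noncomputable section

variable {V : Type*} [NormedAddCommGroup V] [NormedSpace ℝ V]
  [MeasurableSpace V] [BorelSpace V]

/-- `π` is a coupling of `μ` and `ν`. -/
def IsCoupling (π : Measure (V × V)) (μ ν : Measure V) : Prop :=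
  IsProbabilityMeasure π ∧ π.map Prod.fst = μ ∧ π.map Prod.snd = ν

/-- Squared 2-Wasserstein distance, as infimum of quadratic cost over couplings. -/
def W2sq (μ ν : Measure V) : ℝ :=
  sInf {c : ℝ | ∃ π : Measure (V × V), IsCoupling π μ ν ∧ c = ∫ p, ‖p.1 - p.2‖ ^ 2 ∂π}

/-- The 2-Wasserstein distance. -/
def W2 (μ ν : Measure V) : ℝ := Real.sqrt (W2sq μ ν)

/-- `μ` is a Borel probability measure with finite second moment. -/
def IsP2 (μ : Measure V) : Prop :=
  IsProbabilityMeasure μ ∧ Integrable (fun x => ‖x‖ ^ 2) μ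

/-- Convex order: `∫ φ dμ ≤ ∫ φ dν` for every convex `φ` for which both integrals exist. -/
def ConvexOrder (μ ν : Measure V) : Prop :=
  ∀ φ : V → ℝ, ConvexOn ℝ Set.univ φ → Integrable φ μ → Integrable φ ν →
    ∫ x, φ x ∂μ ≤ ∫ x, φ x ∂ν

/-- `X` is a Borel map, square-integrable w.r.t. `ρ₀`. -/
def MemL2 (ρ₀ : Measure V) (X : V → V) : Prop :=
  Measurable X ∧ Integrable (fun x => ‖X x‖ ^ 2) ρ₀

/-- `μs` is a backward projection of `μ` onto the convex order cone below `ν`. -/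
def IsBackwardProj (ν μ μs : Measure V) : Prop :=
  IsP2 μs ∧ ConvexOrder μs ν ∧
    ∀ ρ : Measure V, IsP2 ρ → ConvexOrder ρ ν → W2 μs μ ≤ W2 ρ μ

/-- `ρs` is a forward projection of `ν` above `μ`. -/
def IsForwardProj (μ ν ρs : Measure V) : Prop :=
  IsP2 ρs ∧ ConvexOrder μ ρs ∧
    ∀ ρ : Measure V, IsP2 ρ → ConvexOrder μ ρ → W2 ρs ν ≤ W2 ρ ν

/-- `ρs` is a metric extrapolation of `(ν₀, ν₁)` at time `t`. -/
def IsMetricExtrap (t : ℝ) (ν₀ ν₁ ρs : Measure V) : Prop :=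
  IsP2 ρs ∧ ∀ ρ : Measure V, IsP2 ρ →
    W2sq ρs ν₁ / (2 * (t - 1)) - W2sq ρs ν₀ / (2 * t) ≤
      W2sq ρ ν₁ / (2 * (t - 1)) - W2sq ρ ν₀ / (2 * t)

/-- Constant-speed minimizing geodesic on `[a,b]` for `W₂`. -/
def IsGeodesic (a b : ℝ) (γ : ℝ → Measure V) : Prop :=
  (∀ s ∈ Set.Icc a b, IsP2 (γ s)) ∧
    ∀ s₁ ∈ Set.Icc a b, ∀ s₂ ∈ Set.Icc a b,
      W2 (γ s₁) (γ s₂) = |s₁ - s₂| / (b - a) * W2 (γ a) (γ b)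

/-- Topological support of a measure. -/
def msupport (μ : Measure V) : Set V := {x | ∀ U ∈ nhds x, μ U ≠ 0}

/-- Regular measures: absolutely continuous, compact convex support,
density bounded above and below on the support. -/
def IsP2reg {d : ℕ} (μ : Measure (EuclideanSpace ℝ (Fin d))) : Prop :=
  IsP2 μ ∧ μ ≪ volume ∧ IsCompact (msupport μ) ∧ Convex ℝ (msupport μ) ∧
    ∃ m M : ℝ, 0 < m ∧ 0 < M ∧
      ∀ᵐ x ∂(volume : Measure (EuclideanSpace ℝ (Fin d))),
        x ∈ msupport μ → m ≤ (μ.rnDeriv volume x).toReal ∧ (μ.rnDeriv volume x).toReal ≤ M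

namespace WExtrap

open Filter Topology

set_option linter.unusedSectionVars false

/-! ### Second moments, couplings and the maximal correlation -/

section Basics

variable {H : Type*} [NormedAddCommGroup H] [InnerProductSpace ℝ H] [FiniteDimensional ℝ H]
  [MeasurableSpace H] [BorelSpace H]
variable {Ω : Type*} [MeasurableSpace Ω] {P : Measure Ω}

/-- The second moment of `α`. -/
def m2 (α : Measure H) : ℝ := ∫ x, ‖x‖ ^ 2 ∂α

/-- The maximal correlation `sup 𝔼⟪X, Y⟫` over couplings, encoded through the polarization
identity `W₂²(α, β) = m₂(α) + m₂(β) - 2 corr(α, β)`. -/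
def corr (α β : Measure H) : ℝ := (m2 α + m2 β - W2sq α β) / 2

lemma W2sq_eq (α β : Measure H) : W2sq α β = m2 α + m2 β - 2 * corr α β := by
  unfold corr; ring

lemma integrable_inner {X Y : Ω → H} (hX : MemLp X 2 P) (hY : MemLp Y 2 P) :
    Integrable (fun ω => inner ℝ (X ω) (Y ω)) P := by
  have h1 := (memLp_two_iff_integrable_sq_norm hX.1).1 hX
  have h2 := (memLp_two_iff_integrable_sq_norm hY.1).1 hY
  refine (h1.add h2).mono' (hX.1.inner hY.1) (Eventually.of_forall fun ω => ?_)
  have := norm_inner_le_norm (𝕜 := ℝ) (X ω) (Y ω)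
  simp only [Pi.add_apply]
  nlinarith [sq_nonneg (‖X ω‖ - ‖Y ω‖), norm_nonneg (X ω), norm_nonneg (Y ω)]

lemma integrable_normsq {X : Ω → H} (hX : MemLp X 2 P) :
    Integrable (fun ω => ‖X ω‖ ^ 2) P := (memLp_two_iff_integrable_sq_norm hX.1).1 hX

lemma memLp_of_map {α : Measure H} (hα : IsP2 α) {X : Ω → H} (hX : Measurable X)
    (h : P.map X = α) : MemLp X 2 P := by
  rw [memLp_two_iff_integrable_sq_norm hX.aestronglyMeasurable]
  subst h
  exact (integrable_map_measure (by fun_prop) hX.aemeasurable).1 hα.2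

lemma isP2_map [IsProbabilityMeasure P] {X : Ω → H} (hX : Measurable X) (h : MemLp X 2 P) :
    IsP2 (P.map X) :=
  ⟨Measure.isProbabilityMeasure_map hX.aemeasurable,
    (integrable_map_measure (by fun_prop) hX.aemeasurable).2 (integrable_normsq h)⟩

lemma m2_map {X : Ω → H} (hX : Measurable X) : m2 (P.map X) = ∫ ω, ‖X ω‖ ^ 2 ∂P :=
  integral_map hX.aemeasurable (by fun_prop)

lemma isCoupling_map [IsProbabilityMeasure P] {X Y : Ω → H} (hX : Measurable X)
    (hY : Measurable Y) : IsCoupling (P.map fun ω => (X ω, Y ω)) (P.map X) (P.map Y) := by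
  refine ⟨Measure.isProbabilityMeasure_map (by fun_prop), ?_, ?_⟩
  · rw [Measure.map_map (by fun_prop) (by fun_prop)]; rfl
  · rw [Measure.map_map (by fun_prop) (by fun_prop)]; rfl

lemma integral_normsq_sub {X Y : Ω → H} (hX : MemLp X 2 P) (hY : MemLp Y 2 P) :
    ∫ ω, ‖X ω - Y ω‖ ^ 2 ∂P
      = ∫ ω, ‖X ω‖ ^ 2 ∂P + ∫ ω, ‖Y ω‖ ^ 2 ∂P - 2 * ∫ ω, inner ℝ (X ω) (Y ω) ∂P := by
  have h1 := integrable_normsq hX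
  have h2 := integrable_normsq hY
  have h3 := integrable_inner hX hY
  have h12 : Integrable (fun ω => ‖X ω‖ ^ 2 + ‖Y ω‖ ^ 2) P := h1.add h2
  have e : ∀ ω, ‖X ω - Y ω‖ ^ 2 = (‖X ω‖ ^ 2 + ‖Y ω‖ ^ 2) - 2 * inner ℝ (X ω) (Y ω) := by
    intro ω; rw [norm_sub_sq_real]; ring
  simp_rw [e]
  rw [integral_sub h12 (h3.const_mul 2), integral_add h1 h2, integral_const_mul]

lemma integral_normsq_add {X Y : Ω → H} (hX : MemLp X 2 P) (hY : MemLp Y 2 P) :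
    ∫ ω, ‖X ω + Y ω‖ ^ 2 ∂P
      = ∫ ω, ‖X ω‖ ^ 2 ∂P + ∫ ω, ‖Y ω‖ ^ 2 ∂P + 2 * ∫ ω, inner ℝ (X ω) (Y ω) ∂P := by
  have h1 := integrable_normsq hX
  have h2 := integrable_normsq hY
  have h3 := integrable_inner hX hY
  have h12 : Integrable (fun ω => ‖X ω‖ ^ 2 + ‖Y ω‖ ^ 2) P := h1.add h2
  have e : ∀ ω, ‖X ω + Y ω‖ ^ 2 = (‖X ω‖ ^ 2 + ‖Y ω‖ ^ 2) + 2 * inner ℝ (X ω) (Y ω) := by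
    intro ω; rw [norm_add_sq_real]; ring
  simp_rw [e]
  rw [integral_add h12 (h3.const_mul 2), integral_add h1 h2, integral_const_mul]

lemma bddBelow_cost (α β : Measure H) :
    BddBelow {c : ℝ | ∃ π : Measure (H × H), IsCoupling π α β ∧ c = ∫ p, ‖p.1 - p.2‖ ^ 2 ∂π} := by
  refine ⟨0, ?_⟩
  rintro c ⟨π, -, rfl⟩
  exact integral_nonneg fun _ => by positivity

lemma W2sq_nonneg (α β : Measure H) : 0 ≤ W2sq α β := by
  apply Real.sInf_nonneg
  rintro c ⟨π, -, rfl⟩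
  exact integral_nonneg fun _ => by positivity

lemma W2sq_le [IsProbabilityMeasure P] {X Y : Ω → H} (hX : Measurable X) (hY : Measurable Y) :
    W2sq (P.map X) (P.map Y) ≤ ∫ ω, ‖X ω - Y ω‖ ^ 2 ∂P := by
  refine csInf_le (bddBelow_cost _ _) ⟨_, isCoupling_map hX hY, ?_⟩
  rw [integral_map (by fun_prop) (by fun_prop)]

/-- The correlation of any two random vectors is at most the maximal correlation of their laws. -/
lemma inner_le_corr [IsProbabilityMeasure P] {X Y : Ω → H} (hX : Measurable X) (hY : Measurable Y)
    (h2X : MemLp X 2 P) (h2Y : MemLp Y 2 P) :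
    ∫ ω, inner ℝ (X ω) (Y ω) ∂P ≤ corr (P.map X) (P.map Y) := by
  have := W2sq_le (P := P) hX hY
  rw [integral_normsq_sub h2X h2Y] at this
  rw [corr, m2_map hX, m2_map hY]
  linarith

lemma _root_.IsCoupling.memLp_fst {π : Measure (H × H)} {α β : Measure H} (h : IsCoupling π α β)
    (hα : IsP2 α) : MemLp (fun p : H × H => p.1) 2 π := memLp_of_map hα measurable_fst h.2.1

lemma _root_.IsCoupling.memLp_snd {π : Measure (H × H)} {α β : Measure H} (h : IsCoupling π α β)
    (hβ : IsP2 β) : MemLp (fun p : H × H => p.2) 2 π := memLp_of_map hβ measurable_snd h.2.2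

lemma _root_.IsCoupling.inner_le {π : Measure (H × H)} {α β : Measure H} (h : IsCoupling π α β)
    (hα : IsP2 α) (hβ : IsP2 β) : ∫ p, inner ℝ p.1 p.2 ∂π ≤ corr α β := by
  have := h.1
  have := inner_le_corr (P := π) measurable_fst measurable_snd (h.memLp_fst hα) (h.memLp_snd hβ)
  rwa [h.2.1, h.2.2] at this

lemma _root_.IsCoupling.cost {π : Measure (H × H)} {α β : Measure H} (h : IsCoupling π α β)
    (hα : IsP2 α) (hβ : IsP2 β) :
    ∫ p, ‖p.1 - p.2‖ ^ 2 ∂π = m2 α + m2 β - 2 * ∫ p, inner ℝ p.1 p.2 ∂π := by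
  rw [integral_normsq_sub (h.memLp_fst hα) (h.memLp_snd hβ), ← m2_map (P := π) measurable_fst,
    ← m2_map (P := π) measurable_snd, h.2.1, h.2.2]

lemma corr_comm_le {α β : Measure H} : W2sq α β ≤ W2sq β α := by
  unfold W2sq
  have key : ∀ c, (∃ π : Measure (H × H), IsCoupling π β α ∧ c = ∫ p, ‖p.1 - p.2‖ ^ 2 ∂π) →
      (∃ π : Measure (H × H), IsCoupling π α β ∧ c = ∫ p, ‖p.1 - p.2‖ ^ 2 ∂π) := by
    rintro c ⟨π, hπ, rfl⟩
    have := hπ.1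
    have := isCoupling_map (P := π) measurable_snd measurable_fst
    rw [hπ.2.1, hπ.2.2] at this
    refine ⟨_, this, ?_⟩
    rw [integral_map (by fun_prop) (by fun_prop)]
    simp_rw [norm_sub_rev]
  have key' : ∀ c, (∃ π : Measure (H × H), IsCoupling π α β ∧ c = ∫ p, ‖p.1 - p.2‖ ^ 2 ∂π) →
      (∃ π : Measure (H × H), IsCoupling π β α ∧ c = ∫ p, ‖p.1 - p.2‖ ^ 2 ∂π) := by
    rintro c ⟨π, hπ, rfl⟩
    have := hπ.1
    have := isCoupling_map (P := π) measurable_snd measurable_fst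
    rw [hπ.2.1, hπ.2.2] at this
    refine ⟨_, this, ?_⟩
    rw [integral_map (by fun_prop) (by fun_prop)]
    simp_rw [norm_sub_rev]
  apply le_of_eq
  congr 1
  ext c
  exact ⟨key' c, key c⟩

lemma W2sq_comm (α β : Measure H) : W2sq α β = W2sq β α := le_antisymm corr_comm_le corr_comm_le

lemma corr_comm (α β : Measure H) : corr α β = corr β α := by
  unfold corr; rw [W2sq_comm]; ring

/-- Couplings of two fixed laws are sequentially compact along an ultrafilter, and since the second
moments are fixed, integrals of continuous functions of quadratic growth pass to the limit. -/
lemma coupling_compact {α β : Measure H} (hα : IsP2 α) (hβ : IsP2 β)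
    (π : ℕ → Measure (H × H)) (h : ∀ n, IsCoupling (π n) α β) :
    ∃ π' : Measure (H × H), IsCoupling π' α β ∧ ∃ U : Ultrafilter ℕ, (U : Filter ℕ) ≤ atTop ∧
      ∀ f : H × H → ℝ, Continuous f → (∃ K, ∀ p, |f p| ≤ K * (1 + ‖p.1‖ ^ 2 + ‖p.2‖ ^ 2)) →
        Tendsto (fun n => ∫ p, f p ∂(π n)) U (𝓝 (∫ p, f p ∂π')) := by
  have := hα.1
  have := hβ.1
  let S : Set (ProbabilityMeasure (H × H)) := {q | IsCoupling (q : Measure (H × H)) α β}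
  have hS : IsCompact (closure S) := by
    apply isCompact_closure_of_isTightMeasureSet
    apply IsTightMeasureSet.prodMk
    · refine (isTightMeasureSet_singleton (μ := α)).subset ?_
      rintro _ ⟨_, ⟨q, hq, rfl⟩, rfl⟩
      exact hq.2.1
    · refine (isTightMeasureSet_singleton (μ := β)).subset ?_
      rintro _ ⟨_, ⟨q, hq, rfl⟩, rfl⟩
      exact hq.2.2
  let Q : ℕ → ProbabilityMeasure (H × H) := fun n => ⟨π n, (h n).1⟩
  let U : Ultrafilter ℕ := hyperfilter ℕ
  have hU : (U : Filter ℕ) ≤ atTop := Nat.hyperfilter_le_atTop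
  obtain ⟨π', -, hlim⟩ := hS.ultrafilter_le_nhds (U.map Q) (by
    rw [le_principal_iff]
    change Q ⁻¹' closure S ∈ (U : Filter ℕ)
    exact Filter.univ_mem' fun n => subset_closure (show Q n ∈ S from h n))
  have hlim : Tendsto Q U (𝓝 π') := hlim
  have hmarg : IsCoupling (π' : Measure (H × H)) α β := by
    refine ⟨inferInstance, ?_, ?_⟩
    · have h1 := ((ProbabilityMeasure.continuous_map (Ω := H × H) continuous_fst).tendsto π').comp hlim
      have h2 : ((fun ν : ProbabilityMeasure (H × H) =>
          ν.map continuous_fst.measurable.aemeasurable) ∘ Q) = fun _ => ⟨α, hα.1⟩ := by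
        funext n
        apply Subtype.ext
        exact (h n).2.1
      rw [h2] at h1
      have := tendsto_nhds_unique h1 tendsto_const_nhds
      exact congrArg Subtype.val this
    · have h1 := ((ProbabilityMeasure.continuous_map (Ω := H × H) continuous_snd).tendsto π').comp hlim
      have h2 : ((fun ν : ProbabilityMeasure (H × H) =>
          ν.map continuous_snd.measurable.aemeasurable) ∘ Q) = fun _ => ⟨β, hβ.1⟩ := by
        funext n
        apply Subtype.ext
        exact (h n).2.2
      rw [h2] at h1
      have := tendsto_nhds_unique h1 tendsto_const_nhds
      exact congrArg Subtype.val this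
  refine ⟨π', hmarg, U, hU, ?_⟩
  have hq : ∀ q : Measure (H × H), IsCoupling q α β →
      Integrable (fun p : H × H => 1 + ‖p.1‖ ^ 2 + ‖p.2‖ ^ 2) q ∧
      ∫ p, (1 + ‖p.1‖ ^ 2 + ‖p.2‖ ^ 2) ∂q = 1 + m2 α + m2 β := by
    intro q hq
    have := hq.1
    have h1 := integrable_normsq (hq.memLp_fst hα)
    have h2 := integrable_normsq (hq.memLp_snd hβ)
    have h0 : Integrable (fun _ : H × H => (1 : ℝ)) q := integrable_const _
    have h01 : Integrable (fun p : H × H => 1 + ‖p.1‖ ^ 2) q := h0.add h1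
    refine ⟨h01.add h2, ?_⟩
    rw [integral_add h01 h2, integral_add h0 h1, ← m2_map (P := q) measurable_fst,
      ← m2_map (P := q) measurable_snd, hq.2.1, hq.2.2]
    simp
  have hInt : ∀ f : H × H → ℝ, Continuous f → ∀ K,
      (∀ p, |f p| ≤ K * (1 + ‖p.1‖ ^ 2 + ‖p.2‖ ^ 2)) →
      ∀ q : Measure (H × H), IsCoupling q α β → Integrable f q := by
    intro f hf K hK q hq'
    exact ((hq q hq').1.const_mul K).mono' hf.aestronglyMeasurable (Eventually.of_forall hK)
  -- lower semicontinuity for nonnegative integrands, by truncation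
  have lsc : ∀ f : H × H → ℝ, Continuous f → (∀ p, 0 ≤ f p) → ∀ K,
      (∀ p, |f p| ≤ K * (1 + ‖p.1‖ ^ 2 + ‖p.2‖ ^ 2)) →
      ∀ c, c < ∫ p, f p ∂(π' : Measure (H × H)) → ∀ᶠ n in (U : Filter ℕ), c < ∫ p, f p ∂(π n) := by
    intro f hf h0 K hK c hc
    have hfi := hInt f hf K hK π' hmarg
    have ht : Tendsto (fun N : ℕ => ∫ p, min (f p) N ∂(π' : Measure (H × H))) atTop
        (𝓝 (∫ p, f p ∂(π' : Measure (H × H)))) := by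
      refine tendsto_integral_of_dominated_convergence f (fun N => by fun_prop) hfi
        (fun N => Eventually.of_forall fun p => ?_) (Eventually.of_forall fun p => ?_)
      · rw [Real.norm_of_nonneg (le_min (h0 p) (Nat.cast_nonneg N))]
        exact min_le_left _ _
      · obtain ⟨N, hN⟩ := exists_nat_ge (f p)
        refine tendsto_const_nhds.congr' ?_
        filter_upwards [eventually_ge_atTop N] with M hM
        rw [min_eq_left]
        exact hN.trans (by exact_mod_cast hM)
    obtain ⟨N, hN⟩ := (ht.eventually_const_lt hc).exists
    let g : BoundedContinuousFunction (H × H) ℝ :=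
      BoundedContinuousFunction.ofNormedAddCommGroup (fun p => min (f p) N) (by fun_prop) N
        (fun p => by
          rw [Real.norm_of_nonneg (le_min (h0 p) (Nat.cast_nonneg N))]
          exact min_le_right _ _)
    have hg := (ProbabilityMeasure.tendsto_iff_forall_integral_tendsto.1 hlim) g
    have hN' : c < ∫ p, g p ∂(π' : Measure (H × H)) := hN
    filter_upwards [hg.eventually_const_lt hN'] with n hn
    refine hn.trans_le (integral_mono_of_nonneg (Eventually.of_forall fun p => ?_)
      (hInt f hf K hK _ (h n)) (Eventually.of_forall fun p => min_le_left _ _))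
    exact le_min (h0 p) (Nat.cast_nonneg N)
  rintro f hf ⟨K, hK⟩
  have hqc : Continuous fun p : H × H => 1 + ‖p.1‖ ^ 2 + ‖p.2‖ ^ 2 := by fun_prop
  have hplus : ∀ q : Measure (H × H), IsCoupling q α β →
      ∫ p, (K * (1 + ‖p.1‖ ^ 2 + ‖p.2‖ ^ 2) + f p) ∂q = K * (1 + m2 α + m2 β) + ∫ p, f p ∂q := by
    intro q hq'
    rw [integral_add ((hq q hq').1.const_mul K) (hInt f hf K hK q hq'), integral_const_mul,
      (hq q hq').2]
  have hminus : ∀ q : Measure (H × H), IsCoupling q α β →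
      ∫ p, (K * (1 + ‖p.1‖ ^ 2 + ‖p.2‖ ^ 2) - f p) ∂q = K * (1 + m2 α + m2 β) - ∫ p, f p ∂q := by
    intro q hq'
    rw [integral_sub ((hq q hq').1.const_mul K) (hInt f hf K hK q hq'), integral_const_mul,
      (hq q hq').2]
  rw [tendsto_order]
  constructor
  · intro c hc
    have := lsc (fun p => K * (1 + ‖p.1‖ ^ 2 + ‖p.2‖ ^ 2) + f p) (by fun_prop)
      (fun p => by linarith [neg_abs_le (f p), hK p]) (2 * K)
      (fun p => by
        rw [abs_of_nonneg (by linarith [neg_abs_le (f p), hK p])]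
        linarith [le_abs_self (f p), hK p])
      (K * (1 + m2 α + m2 β) + c) (by rw [hplus _ hmarg]; linarith)
    filter_upwards [this] with n hn
    rw [hplus _ (h n)] at hn
    linarith
  · intro c hc
    have := lsc (fun p => K * (1 + ‖p.1‖ ^ 2 + ‖p.2‖ ^ 2) - f p) (by fun_prop)
      (fun p => by linarith [le_abs_self (f p), hK p]) (2 * K)
      (fun p => by
        rw [abs_of_nonneg (by linarith [le_abs_self (f p), hK p])]
        linarith [neg_abs_le (f p), hK p])
      (K * (1 + m2 α + m2 β) - c) (by rw [hminus _ hmarg]; linarith)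
    filter_upwards [this] with n hn
    rw [hminus _ (h n)] at hn
    linarith

lemma abs_inner_growth (p : H × H) : |inner ℝ p.1 p.2| ≤ 1 * (1 + ‖p.1‖ ^ 2 + ‖p.2‖ ^ 2) := by
  have := abs_real_inner_le_norm p.1 p.2
  nlinarith [sq_nonneg (‖p.1‖ - ‖p.2‖), norm_nonneg p.1, norm_nonneg p.2]

/-- Existence of optimal couplings. -/
lemma exists_opt {α β : Measure H} (hα : IsP2 α) (hβ : IsP2 β) :
    ∃ π : Measure (H × H), IsCoupling π α β ∧ ∫ p, inner ℝ p.1 p.2 ∂π = corr α β := by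
  have := hα.1
  have := hβ.1
  have hne : {c : ℝ | ∃ π : Measure (H × H), IsCoupling π α β ∧
      c = ∫ p, ‖p.1 - p.2‖ ^ 2 ∂π}.Nonempty :=
    ⟨_, α.prod β, ⟨inferInstance, by simp,
      by simp⟩, rfl⟩
  have hex : ∀ n : ℕ, ∃ π : Measure (H × H), IsCoupling π α β ∧
      ∫ p, ‖p.1 - p.2‖ ^ 2 ∂π < W2sq α β + 1 / ((n : ℝ) + 1) := by
    intro n
    obtain ⟨c, ⟨π, hπ, rfl⟩, hc⟩ := exists_lt_of_csInf_lt hne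
      (show W2sq α β < W2sq α β + 1 / ((n : ℝ) + 1) by
        have : 0 < 1 / ((n : ℝ) + 1) := by positivity
        linarith)
    exact ⟨π, hπ, hc⟩
  choose π hπ hlt using hex
  obtain ⟨π', hπ', U, hU, hlim⟩ := coupling_compact hα hβ π hπ
  refine ⟨π', hπ', le_antisymm (hπ'.inner_le hα hβ) ?_⟩
  have h1 := hlim (fun p => inner ℝ p.1 p.2) (by fun_prop) ⟨1, abs_inner_growth⟩
  have h2 : Tendsto (fun n : ℕ => corr α β - (1 / ((n : ℝ) + 1)) / 2) U
      (𝓝 (corr α β - 0 / 2)) :=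
    ((tendsto_one_div_add_atTop_nhds_zero_nat.mono_left hU).div_const 2).const_sub _
  have := le_of_tendsto_of_tendsto' h2 h1 (fun n => by
    have := hlt n
    rw [(hπ n).cost hα hβ, W2sq_eq] at this
    linarith)
  simpa using this

/-- Gluing of two laws along a common marginal. -/
lemma glue {A B C : Type*} [MeasurableSpace A] [MeasurableSpace B] [MeasurableSpace C]
    [StandardBorelSpace C] [Nonempty C] (π₁ : Measure (A × B)) (π₂ : Measure (B × C))
    [IsProbabilityMeasure π₁] [IsProbabilityMeasure π₂]
    (h : π₁.map Prod.snd = π₂.map Prod.fst) :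
    ∃ Q : Measure ((A × B) × C), IsProbabilityMeasure Q ∧ Q.map Prod.fst = π₁ ∧
      Q.map (fun p => (p.1.2, p.2)) = π₂ := by
  let κ : ProbabilityTheory.Kernel B C := π₂.condKernel
  let Q : Measure ((A × B) × C) := π₁.compProd (κ.comap Prod.snd measurable_snd)
  refine ⟨Q, inferInstance, ?_, ?_⟩
  · exact Measure.fst_compProd _ _
  · have h2 : π₂ = (π₂.map Prod.fst).compProd κ := (π₂.disintegrate π₂.condKernel).symm
    conv_rhs => rw [h2, ← h]
    ext s hs
    rw [Measure.map_apply (by fun_prop) hs, Measure.compProd_apply (hs.preimage (by fun_prop)),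
      Measure.compProd_apply hs, lintegral_map (by
        exact ProbabilityTheory.Kernel.measurable_kernel_prodMk_left hs) measurable_snd]
    rfl

end Basics

/-! ### Cyclical monotonicity and uniqueness of optimal couplings -/

section Monotone

variable {H : Type*} [NormedAddCommGroup H] [InnerProductSpace ℝ H] [FiniteDimensional ℝ H]
  [MeasurableSpace H] [BorelSpace H]

/-- The change in total correlation when the second coordinates of the points `p i` are permuted
by `c`. -/
def swapGain {ι : Type*} [Fintype ι] (c : Equiv.Perm ι) (p : ι → H × H) : ℝ :=
  ∑ i, inner ℝ (p i).1 ((p (c i)).2 - (p i).2)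

lemma continuous_swapGain {ι : Type*} [Fintype ι] (c : Equiv.Perm ι) :
    Continuous (swapGain (H := H) c) := by
  unfold swapGain
  fun_prop

lemma swapGain_comp {ι : Type*} [Fintype ι] (c : Equiv.Perm ι) (p : ι → H × H) :
    swapGain c (fun i => p (c i)) = swapGain c p := by
  unfold swapGain
  exact Equiv.sum_comp c (fun i => inner ℝ (p i).1 ((p (c i)).2 - (p i).2))

/-- An optimal coupling is cyclically monotone on independent samples: exchanging the second
coordinates of the samples exactly when this increases the correlation yields another coupling,
because the set where the exchange takes place is invariant under the permutation. -/
lemma swapGain_ae {ι : Type*} [Fintype ι] (c : Equiv.Perm ι) {α β : Measure H} (hα : IsP2 α)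
    (hβ : IsP2 β) {π : Measure (H × H)} (hπ : IsCoupling π α β)
    (hopt : ∫ p, inner ℝ p.1 p.2 ∂π = corr α β) :
    ∀ᵐ p ∂(Measure.pi fun _ : ι => π), swapGain c p ≤ 0 := by
  have := hπ.1
  set R : Measure (ι → H × H) := Measure.pi fun _ : ι => π with hR
  let A : Set (ι → H × H) := {p | 0 < swapGain c p}
  have hA : MeasurableSet A := (isOpen_lt continuous_const (continuous_swapGain c)).measurableSet
  let T : (ι → H × H) → (ι → H × H) := fun p i => p (c i)
  have hT : MeasurePreserving T R R := by
    have h1 := measurePreserving_piCongrLeft (fun _ : ι => π) c.symm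
    have h2 : (MeasurableEquiv.piCongrLeft (fun _ : ι => H × H) c.symm : _ → _) = T := by
      funext p i
      have := MeasurableEquiv.piCongrLeft_apply_apply c.symm p (c i) (β := fun _ : ι => H × H)
      simpa using this
    rw [← h2]
    exact h1
  have hTA : T ⁻¹' A = A := by
    ext p
    simp only [A, T, Set.mem_preimage, Set.mem_ofPred_eq, swapGain_comp]
  have hev : ∀ i : ι, MeasurePreserving (fun p : ι → H × H => p i) R π :=
    fun i => measurePreserving_eval (fun _ : ι => π) i
  have hfst : ∀ i : ι, R.map (fun p => (p i).1) = α := by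
    intro i
    rw [← hπ.2.1, ← (hev i).map_eq, Measure.map_map measurable_fst (hev i).measurable]
    rfl
  have hsnd : ∀ i : ι, R.map (fun p => (p i).2) = β := by
    intro i
    rw [← hπ.2.2, ← (hev i).map_eq, Measure.map_map measurable_snd (hev i).measurable]
    rfl
  have m1 : ∀ i : ι, Measurable fun p : ι → H × H => (p i).1 := fun i => by fun_prop
  have m2' : ∀ i : ι, Measurable fun p : ι → H × H => (p i).2 := fun i => by fun_prop
  have L1 : ∀ i, MemLp (fun p : ι → H × H => (p i).1) 2 R := fun i => memLp_of_map hα (m1 i) (hfst i)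
  have L2 : ∀ i, MemLp (fun p : ι → H × H => (p i).2) 2 R := fun i => memLp_of_map hβ (m2' i) (hsnd i)
  have hInt : ∀ i, Integrable
      (fun p : ι → H × H => inner ℝ (p i).1 ((p (c i)).2 - (p i).2)) R :=
    fun i => integrable_inner (L1 i) ((L2 (c i)).sub (L2 i))
  classical
  have key : ∀ i, ∫ p in A, inner ℝ (p i).1 ((p (c i)).2 - (p i).2) ∂(R) ≤ 0 := by
    intro i
    let Z : (ι → H × H) → H := A.piecewise (fun p => (p (c i)).2) (fun p => (p i).2)
    have hZ : Measurable Z := (m2' (c i)).piecewise hA (m2' i)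
    have hZmap : R.map Z = β := by
      rw [← hsnd i]
      ext s hs
      rw [Measure.map_apply hZ hs, Measure.map_apply (m2' i) hs,
        ← measure_inter_add_sdiff (Z ⁻¹' s) hA,
        ← measure_inter_add_sdiff ((fun p : ι → H × H => (p i).2) ⁻¹' s) hA]
      congr 1
      · have e : Z ⁻¹' s ∩ A = T ⁻¹' (((fun p : ι → H × H => (p i).2) ⁻¹' s) ∩ A) := by
          rw [Set.preimage_inter, hTA]
          ext p
          simp only [Set.mem_inter_iff, Set.mem_preimage, and_congr_left_iff]
          intro hp
          simp [Z, hp, T]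
        rw [e, hT.measure_preimage (((m2' i) hs).inter hA).nullMeasurableSet]
      · congr 1
        ext p
        simp only [Set.mem_sdiff, Set.mem_preimage, and_congr_left_iff]
        intro hp
        simp [Z, hp]
    have LZ := memLp_of_map hβ hZ hZmap
    have h1 := inner_le_corr (P := R) (m1 i) hZ (L1 i) LZ
    rw [hfst i, hZmap, ← hopt] at h1
    have h2 : ∫ p, inner ℝ p.1 p.2 ∂π = ∫ p, inner ℝ (p i).1 (p i).2 ∂(R) := by
      rw [← (hev i).map_eq, integral_map (hev i).measurable.aemeasurable (by fun_prop)]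
    rw [h2, ← sub_nonpos, ← integral_sub (integrable_inner (L1 i) LZ)
      (integrable_inner (L1 i) (L2 i))] at h1
    rw [← integral_indicator hA]
    refine le_of_eq_of_le (integral_congr_ae (Eventually.of_forall fun p => ?_)) h1
    by_cases hp : p ∈ A
    · simp [Z, hp, inner_sub_right]
    · simp [Z, hp]
  have htot : ∫ p in A, swapGain c p ∂(R) ≤ 0 := by
    unfold swapGain
    rw [integral_finsetSum _ fun i _ => (hInt i).integrableOn]
    exact Finset.sum_nonpos fun i _ => key i
  have hSint : Integrable (swapGain c) R := integrable_finsetSum _ fun i _ => hInt i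
  have hnn : 0 ≤ᵐ[R.restrict A] swapGain c := by
    filter_upwards [ae_restrict_mem hA] with p hp
    exact le_of_lt hp
  have hz := (integral_eq_zero_iff_of_nonneg_ae hnn hSint.integrableOn).1
    (le_antisymm htot (integral_nonneg_of_ae hnn))
  rw [Filter.EventuallyEq, ae_restrict_iff' hA] at hz
  filter_upwards [hz] with p hp
  by_contra hcon
  push Not at hcon
  have := hp hcon
  simp only [Pi.zero_apply] at this
  linarith

/-- The support of an optimal coupling is cyclically monotone. -/
lemma swapGain_support {ι : Type*} [Fintype ι] (c : Equiv.Perm ι) {α β : Measure H} (hα : IsP2 α)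
    (hβ : IsP2 β) {π : Measure (H × H)} (hπ : IsCoupling π α β)
    (hopt : ∫ p, inner ℝ p.1 p.2 ∂π = corr α β) (p : ι → H × H) (hp : ∀ i, p i ∈ π.support) :
    swapGain c p ≤ 0 := by
  have := hπ.1
  by_contra hcon
  push Not at hcon
  have hopen : IsOpen {p : ι → H × H | 0 < swapGain c p} :=
    isOpen_lt continuous_const (continuous_swapGain c)
  obtain ⟨u, hu, hsub⟩ := isOpen_pi_iff'.1 hopen p hcon
  have h0 : (Measure.pi fun _ : ι => π) (Set.univ.pi u) = 0 := by
    refine measure_mono_null (fun q hq => ?_) (ae_iff.1 (swapGain_ae c hα hβ hπ hopt))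
    have := hsub hq
    simpa using this
  rw [Measure.pi_pi, Finset.prod_eq_zero_iff] at h0
  obtain ⟨i, -, hi⟩ := h0
  exact (((Measure.mem_support_iff_forall _).1 (hp i)) (u i)
    ((hu i).1.mem_nhds (hu i).2)).ne' hi

lemma support_monotone {α β : Measure H} (hα : IsP2 α)
    (hβ : IsP2 β) {π : Measure (H × H)} (hπ : IsCoupling π α β)
    (hopt : ∫ p, inner ℝ p.1 p.2 ∂π = corr α β) {p q : H × H} (hp : p ∈ π.support)
    (hq : q ∈ π.support) : 0 ≤ inner ℝ (p.1 - q.1) (p.2 - q.2) := by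
  have := swapGain_support (ι := Fin 2) (Equiv.swap 0 1) hα hβ hπ hopt ![p, q] (by
    intro i; fin_cases i <;> simpa)
  simp only [swapGain, Fin.sum_univ_two, Equiv.swap_apply_left, Equiv.swap_apply_right,
    Matrix.cons_val_zero, Matrix.cons_val_one] at this
  simp only [inner_sub_left, inner_sub_right] at this ⊢
  linarith

/-- A closed monotone subset of `H × H` is, off a set of null first coordinates, the graph of a
function: the set of points having two images separated by rational levels in a coordinate
direction meets each line in that direction at most once, hence has infinitely many disjoint
translates. -/
lemma monotone_graph (ν : Measure H) [ν.IsAddHaarMeasure] {Γ : Set (H × H)} (hΓ : IsClosed Γ)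
    (hmono : ∀ p ∈ Γ, ∀ q ∈ Γ, 0 ≤ inner ℝ (p.1 - q.1) (p.2 - q.2)) :
    ∃ N : Set H, MeasurableSet N ∧ ν N = 0 ∧
      ∀ x ∉ N, ∀ z z', (x, z) ∈ Γ → (x, z') ∈ Γ → z = z' := by
  let b := stdOrthonormalBasis ℝ H
  let C : (Fin (Module.finrank ℝ H) × ℚ × ℚ) → Set (H × H × H) := fun k =>
    {w | (w.1, w.2.1) ∈ Γ ∧ (w.1, w.2.2) ∈ Γ ∧ inner ℝ (b k.1) w.2.1 ≤ (k.2.1 : ℝ) ∧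
      (k.2.2 : ℝ) ≤ inner ℝ (b k.1) w.2.2 ∧ k.2.1 < k.2.2}
  have hC : ∀ k, IsClosed (C k) := by
    intro k
    have c1 : IsClosed {w : H × H × H | (w.1, w.2.1) ∈ Γ} := hΓ.preimage (by fun_prop)
    have c2 : IsClosed {w : H × H × H | (w.1, w.2.2) ∈ Γ} := hΓ.preimage (by fun_prop)
    have c3 : IsClosed {w : H × H × H | inner ℝ (b k.1) w.2.1 ≤ (k.2.1 : ℝ)} :=
      isClosed_le (by fun_prop) (by fun_prop)
    have c4 : IsClosed {w : H × H × H | (k.2.2 : ℝ) ≤ inner ℝ (b k.1) w.2.2} :=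
      isClosed_le (by fun_prop) (by fun_prop)
    exact c1.inter (c2.inter (c3.inter (c4.inter isClosed_const)))
  have hmeas : ∀ k, MeasurableSet (Prod.fst '' C k) := by
    intro k
    obtain ⟨K, hK, hKU⟩ := isSigmaCompact_univ.of_isClosed_subset (hC k) (Set.subset_univ _)
    rw [← hKU, Set.image_iUnion]
    exact MeasurableSet.iUnion fun n => ((hK n).image continuous_fst).measurableSet
  have hnull : ∀ k, ν (Prod.fst '' C k) = 0 := by
    intro k
    have hb : ‖b k.1‖ = 1 := b.orthonormal.1 k.1
    -- no two points of the projection differ by a positive multiple of the basis vector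
    have hline : ∀ x ∈ Prod.fst '' C k, ∀ s : ℝ, 0 < s → x + s • b k.1 ∉ Prod.fst '' C k := by
      rintro _ ⟨⟨x, z, z'⟩, ⟨h1, h2, h3, h4, h5⟩, rfl⟩ s hs ⟨⟨x', w, w'⟩, ⟨g1, g2, g3, g4, g5⟩, hx'⟩
      simp only at h1 h2 h3 h4 g1 g2 g3 g4 hx'
      have h := hmono _ g1 _ h2
      simp only [hx', add_sub_cancel_left, inner_smul_left, inner_sub_right] at h
      have hlt : (k.2.1 : ℝ) < k.2.2 := by exact_mod_cast h5
      have : s * (inner ℝ (b k.1) w - inner ℝ (b k.1) z') < 0 :=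
        mul_neg_of_pos_of_neg hs (by linarith)
      simp at h
      linarith
    refine Measure.addHaar_eq_zero_of_disjoint_translates ν
      (fun n : ℕ => (1 / ((n : ℝ) + 1)) • b k.1) ?_ ?_ (hmeas k)
    · refine (Metric.isBounded_closedBall (x := (0 : H)) (r := 1)).subset ?_
      rintro _ ⟨n, rfl⟩
      simp only [mem_closedBall_zero_iff, norm_smul, hb, mul_one]
      rw [Real.norm_of_nonneg (by positivity), div_le_one (by positivity)]
      linarith [(Nat.cast_nonneg n : (0 : ℝ) ≤ n)]
    · intro n m hnm
      rw [Function.onFun, Set.disjoint_left]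
      intro y hy hy'
      simp only [Set.singleton_add, Set.mem_image] at hy hy'
      obtain ⟨x, hx, rfl⟩ := hy
      obtain ⟨x', hx', he⟩ := hy'
      have hne : 1 / ((n : ℝ) + 1) ≠ 1 / ((m : ℝ) + 1) := by
        intro h
        apply hnm
        have hn : (n : ℝ) + 1 ≠ 0 := by positivity
        have hm : (m : ℝ) + 1 ≠ 0 := by positivity
        field_simp at h
        have : (n : ℝ) = m := by linarith
        exact_mod_cast this
      rcases lt_or_gt_of_ne hne with hlt | hlt
      · refine hline x' ?_ (1 / ((m : ℝ) + 1) - 1 / ((n : ℝ) + 1)) (by linarith) ?_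
        · simpa using hx'
        · have : x' + (1 / ((m : ℝ) + 1) - 1 / ((n : ℝ) + 1)) • b k.1 = x := by
            rw [sub_smul]
            rw [← add_sub_assoc, sub_eq_iff_eq_add, add_comm x', he, add_comm]
          rw [this]; simpa using hx
      · refine hline x ?_ (1 / ((n : ℝ) + 1) - 1 / ((m : ℝ) + 1)) (by linarith) ?_
        · simpa using hx
        · have : x + (1 / ((n : ℝ) + 1) - 1 / ((m : ℝ) + 1)) • b k.1 = x' := by
            rw [sub_smul]
            rw [← add_sub_assoc, sub_eq_iff_eq_add, add_comm x, ← he, add_comm]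
          rw [this]; simpa using hx'
  refine ⟨⋃ k, Prod.fst '' C k, MeasurableSet.iUnion hmeas, measure_iUnion_null hnull, ?_⟩
  have aux : ∀ x, x ∉ (⋃ k, Prod.fst '' C k) → ∀ z z', (x, z) ∈ Γ → (x, z') ∈ Γ → ∀ i,
      inner ℝ (b i) z' ≤ inner ℝ (b i) z := by
    intro x hx z z' hz hz' i
    by_contra hcon
    push Not at hcon
    obtain ⟨r, hr1, hr2⟩ := exists_rat_btwn hcon
    obtain ⟨q, hq1, hq2⟩ := exists_rat_btwn hr1
    exact hx (Set.mem_iUnion.2 ⟨(i, q, r), ⟨(x, z, z'), ⟨hz, hz', hq1.le, hr2.le, by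
      exact_mod_cast hq2⟩, rfl⟩⟩)
  intro x hx z z' hz hz'
  apply b.repr.injective
  ext i
  rw [b.repr_apply_apply, b.repr_apply_apply]
  exact le_antisymm (aux x hx z' z hz' hz i) (aux x hx z z' hz hz' i)

/-- The optimal coupling is unique when the first marginal is absolutely continuous: the average
of two optimal couplings is optimal, so both are carried by one monotone set, which is a graph over
almost every point. -/
lemma unique_opt (ν : Measure H) [ν.IsAddHaarMeasure] {α β : Measure H} (hα : IsP2 α)
    (hβ : IsP2 β) (hac : α ≪ ν) {π₁ π₂ : Measure (H × H)} (h₁ : IsCoupling π₁ α β)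
    (h₂ : IsCoupling π₂ α β) (o₁ : ∫ p, inner ℝ p.1 p.2 ∂π₁ = corr α β)
    (o₂ : ∫ p, inner ℝ p.1 p.2 ∂π₂ = corr α β) : π₁ = π₂ := by
  have := h₁.1
  have := h₂.1
  let π : Measure (H × H) := (2⁻¹ : ENNReal) • π₁ + (2⁻¹ : ENNReal) • π₂
  have hhalf : ∀ m : Measure H, (2⁻¹ : ENNReal) • m + (2⁻¹ : ENNReal) • m = m := by
    intro m
    rw [← add_smul, ENNReal.inv_two_add_inv_two, one_smul]
  have hπ : IsCoupling π α β := by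
    refine ⟨⟨?_⟩, ?_, ?_⟩
    · simp [π, ENNReal.inv_two_add_inv_two]
    · simp only [π]
      rw [Measure.map_add _ _ measurable_fst, Measure.map_smul, Measure.map_smul, h₁.2.1, h₂.2.1,
        hhalf]
    · simp only [π]
      rw [Measure.map_add _ _ measurable_snd, Measure.map_smul, Measure.map_smul, h₁.2.2, h₂.2.2,
        hhalf]
  have o : ∫ p, inner ℝ p.1 p.2 ∂π = corr α β := by
    have i₁ := integrable_inner (h₁.memLp_fst hα) (h₁.memLp_snd hβ)
    have i₂ := integrable_inner (h₂.memLp_fst hα) (h₂.memLp_snd hβ)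
    simp only [π]
    rw [integral_add_measure (i₁.smul_measure (by simp)) (i₂.smul_measure (by simp)),
      integral_smul_measure, integral_smul_measure, o₁, o₂]
    simp
    ring
  obtain ⟨N, hNm, hN0, hN⟩ := monotone_graph ν (Measure.isClosed_support (μ := π))
    (fun p hp q hq => support_monotone hα hβ hπ o hp hq)
  have hαN : α N = 0 := hac hN0
  let G : Set (H × H) := π.support ∩ Prod.fst ⁻¹' Nᶜ
  have hG : MeasurableSet G :=
    Measure.isClosed_support.measurableSet.inter (measurable_fst hNm.compl)
  have hinj : Set.InjOn (Prod.fst : H × H → H) G := by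
    rintro ⟨x, z⟩ ⟨hz, hx⟩ ⟨x', z'⟩ ⟨hz', -⟩ (h : x = x')
    subst h
    rw [hN x hx z z' hz hz']
  have hsupp : π π.supportᶜ = 0 := Measure.measure_compl_support
  have main : ∀ q : Measure (H × H), q.map Prod.fst = α → q π.supportᶜ = 0 →
      ∀ E, MeasurableSet E → q E = α (Prod.fst '' (E ∩ G)) := by
    intro q hq hq0 E hE
    have hGq : ∀ᵐ p ∂q, p ∈ G := by
      have h1 : ∀ᵐ p ∂q, p ∈ π.support := hq0
      have h2 : ∀ᵐ p ∂q, p ∈ (Prod.fst ⁻¹' Nᶜ : Set (H × H)) := by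
        rw [ae_iff]
        rw [← hq, Measure.map_apply measurable_fst hNm] at hαN
        have e : {a : H × H | ¬ a ∈ Prod.fst ⁻¹' Nᶜ} = Prod.fst ⁻¹' N := by
          ext
          simp
        rwa [e]
      filter_upwards [h1, h2] with p a b using ⟨a, b⟩
    rw [← hq, Measure.map_apply measurable_fst
      ((hE.inter hG).image_of_measurable_injOn measurable_fst (hinj.mono Set.inter_subset_right))]
    apply measure_congr
    filter_upwards [hGq] with p hp
    apply propext
    constructor
    · intro h
      exact ⟨p, ⟨h, hp⟩, rfl⟩
    · rintro ⟨p', ⟨h1, h2⟩, h3⟩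
      have := hinj h2 hp h3
      subst this
      exact h1
  have hs : ∀ q : Measure (H × H), (2⁻¹ : ENNReal) • q ≤ π → q π.supportᶜ = 0 := by
    intro q hq
    have := (hq π.supportᶜ).trans_eq hsupp
    simpa using this
  ext E hE
  rw [main π₁ h₁.2.1 (hs _ (Measure.le_add_right le_rfl)) E hE,
    main π₂ h₂.2.1 (hs _ (Measure.le_add_left le_rfl)) E hE]

end Monotone

/-! ### Finite maxima of affine functions and the convex order -/

section MaxAffine

variable {H : Type*} [NormedAddCommGroup H] [InnerProductSpace ℝ H] [FiniteDimensional ℝ H]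
  [MeasurableSpace H] [BorelSpace H]

/-- `h` has a bounded measurable selection of subgradients. In particular `h` is convex and
Lipschitz. -/
def BddGrad (h : H → ℝ) : Prop :=
  ∃ (w : H → H) (K : ℝ), Measurable w ∧ (∀ y, ‖w y‖ ≤ K) ∧
    ∀ y y', h y + inner ℝ (w y) (y' - y) ≤ h y'

lemma BddGrad.lipschitz {h : H → ℝ} (hh : BddGrad h) :
    ∃ K : ℝ, 0 ≤ K ∧ ∀ y y', |h y - h y'| ≤ K * ‖y - y'‖ := by
  obtain ⟨w, K, -, hK, hw⟩ := hh
  refine ⟨K, (norm_nonneg _).trans (hK 0), fun y y' => ?_⟩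
  have aux : ∀ a b, h a - h b ≤ K * ‖a - b‖ := by
    intro a b
    have h1 := hw a b
    have h2 := real_inner_le_norm (w a) (a - b)
    have h3 := mul_le_mul_of_nonneg_right (hK a) (norm_nonneg (a - b))
    have h4 : inner ℝ (w a) (b - a) = - inner ℝ (w a) (a - b) := by
      rw [← inner_neg_right, neg_sub]
    linarith
  rw [abs_le]
  constructor
  · have := aux y' y
    rw [norm_sub_rev] at this
    linarith
  · exact aux y y'

lemma BddGrad.continuous {h : H → ℝ} (hh : BddGrad h) : Continuous h := by
  obtain ⟨K, hK, hL⟩ := hh.lipschitz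
  have : LipschitzWith ⟨K, hK⟩ h := LipschitzWith.of_dist_le_mul fun x y => by
    rw [Real.dist_eq, dist_eq_norm]
    exact hL x y
  exact this.continuous

lemma BddGrad.convexOn {h : H → ℝ} (hh : BddGrad h) : ConvexOn ℝ Set.univ h := by
  obtain ⟨w, K, -, hK, hw⟩ := hh
  refine ⟨convex_univ, fun x _ y _ a b ha hb hab => ?_⟩
  have h1 := hw (a • x + b • y) x
  have h2 := hw (a • x + b • y) y
  have e : a * inner ℝ (w (a • x + b • y)) (x - (a • x + b • y)) +
      b * inner ℝ (w (a • x + b • y)) (y - (a • x + b • y)) = 0 := by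
    rw [← inner_smul_right, ← inner_smul_right, ← inner_add_right]
    have : a • (x - (a • x + b • y)) + b • (y - (a • x + b • y)) = 0 := by
      have hb' : b = 1 - a := by linarith
      subst hb'
      module
    rw [this, inner_zero_right]
  simp only [smul_eq_mul]
  have h3 := mul_le_mul_of_nonneg_left h1 ha
  have h4 := mul_le_mul_of_nonneg_left h2 hb
  have h5 : h (a • x + b • y) = a * h (a • x + b • y) + b * h (a • x + b • y) := by
    rw [← add_mul, hab, one_mul]
  rw [mul_add] at h3 h4
  linarith

lemma BddGrad.growth {h : H → ℝ} (hh : BddGrad h) :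
    ∃ K : ℝ, 0 ≤ K ∧ ∀ y, |h y| ≤ |h 0| + K * ‖y‖ := by
  obtain ⟨K, hK, hL⟩ := hh.lipschitz
  refine ⟨K, hK, fun y => ?_⟩
  have := hL y 0
  rw [sub_zero] at this
  have h2 := abs_sub_abs_le_abs_sub (h y) (h 0)
  linarith

lemma BddGrad.integrable {Ω : Type*} [MeasurableSpace Ω] {P : Measure Ω} [IsProbabilityMeasure P]
    {h : H → ℝ} (hh : BddGrad h) {Y : Ω → H} (hY : MemLp Y 2 P) :
    Integrable (fun ω => h (Y ω)) P := by
  obtain ⟨K, hK, hg⟩ := hh.growth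
  have h1 : Integrable Y P := hY.integrable (by norm_num)
  refine ((integrable_const (|h 0|)).add (h1.norm.const_mul K)).mono'
    (hh.continuous.comp_aestronglyMeasurable hY.1) (Eventually.of_forall fun ω => ?_)
  exact hg (Y ω)

lemma bddGrad_affine (a : H) (c : ℝ) : BddGrad (fun y => inner ℝ a y + c) := by
  refine ⟨fun _ => a, ‖a‖, measurable_const, fun _ => le_rfl, fun y y' => ?_⟩
  rw [inner_sub_right]
  linarith

lemma BddGrad.sup {h k : H → ℝ} (hh : BddGrad h) (hk : BddGrad k) :
    BddGrad (fun y => max (h y) (k y)) := by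
  classical
  have c1 := hh.continuous
  have c2 := hk.continuous
  obtain ⟨w, K, wm, hK, hw⟩ := hh
  obtain ⟨v, L, vm, hL, hv⟩ := hk
  let S : Set H := {y | k y ≤ h y}
  have hS : MeasurableSet S := (isClosed_le c2 c1).measurableSet
  refine ⟨S.piecewise w v, max K L, wm.piecewise hS vm, fun y => ?_, fun y y' => ?_⟩
  · by_cases hy : y ∈ S
    · rw [Set.piecewise_eq_of_mem _ _ _ hy]
      exact (hK y).trans (le_max_left _ _)
    · rw [Set.piecewise_eq_of_notMem _ _ _ hy]
      exact (hL y).trans (le_max_right _ _)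
  · simp only
    by_cases hy : y ∈ S
    · have hy' : k y ≤ h y := hy
      rw [Set.piecewise_eq_of_mem _ _ _ hy, max_eq_left hy']
      exact (hw y y').trans (le_max_left _ _)
    · have hy' : h y ≤ k y := (not_le.1 fun h' => hy h').le
      rw [Set.piecewise_eq_of_notMem _ _ _ hy, max_eq_right hy']
      exact (hv y y').trans (le_max_right _ _)

/-- The running pointwise maximum of a sequence of functions. -/
def runMax (f : ℕ → H → ℝ) : ℕ → H → ℝ
  | 0 => f 0
  | n + 1 => fun y => max (runMax f n y) (f (n + 1) y)

lemma runMax_mono (f : ℕ → H → ℝ) (y : H) : Monotone fun n => runMax f n y :=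
  monotone_nat_of_le_succ fun _ => le_max_left _ _

lemma le_runMax (f : ℕ → H → ℝ) (y : H) {i n : ℕ} (hin : i ≤ n) : f i y ≤ runMax f n y := by
  refine le_trans ?_ (runMax_mono f y hin)
  cases i with
  | zero => exact le_rfl
  | succ i => exact le_max_right _ _

lemma runMax_le (f : ℕ → H → ℝ) (y : H) {n : ℕ} {B : ℝ} (h : ∀ i, f i y ≤ B) :
    runMax f n y ≤ B := by
  induction n with
  | zero => exact h 0
  | succ n ih => exact max_le ih (h _)

lemma runMax_bddGrad {f : ℕ → H → ℝ} (hf : ∀ i, BddGrad (f i)) (n : ℕ) :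
    BddGrad (runMax f n) := by
  induction n with
  | zero => exact hf 0
  | succ n ih => exact ih.sup (hf _)

/-- Convex order is determined by finite maxima of affine functions. -/
lemma convexOrder_of_bddGrad {μ ρ : Measure H} (hμ : IsP2 μ) (hρ : IsP2 ρ)
    (h : ∀ f : H → ℝ, BddGrad f → ∫ x, f x ∂μ ≤ ∫ x, f x ∂ρ) : ConvexOrder μ ρ := by
  intro φ hφ iμ iρ
  have hcont : Continuous φ := continuousOn_univ.1 (hφ.continuousOn isOpen_univ)
  obtain ⟨l, c, hle, hsup⟩ := hφ.real_univ_sSup_of_nat_affine_eq hcont.lowerSemicontinuous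
  let f : ℕ → H → ℝ := fun i y => l i y + c i
  have hf : ∀ i, BddGrad (f i) := by
    intro i
    have := bddGrad_affine ((InnerProductSpace.toDual ℝ H).symm (l i)) (c i)
    simpa [f] using this
  have hfle : ∀ i y, f i y ≤ φ y := fun i y => hle i y
  have hlim : ∀ y, Tendsto (fun n => runMax f n y) atTop (𝓝 (φ y)) := by
    intro y
    have hb : BddAbove (Set.range fun n => runMax f n y) :=
      ⟨φ y, by rintro _ ⟨n, rfl⟩; exact runMax_le f y fun i => hfle i y⟩
    have ht := tendsto_atTop_ciSup (runMax_mono f y) hb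
    have : (⨆ n, runMax f n y) = φ y := by
      apply le_antisymm
      · exact ciSup_le fun n => runMax_le f y fun i => hfle i y
      · have e : φ y = ⨆ i, f i y := by
          conv_lhs => rw [← hsup]
          rw [iSup_apply]
          rfl
        rw [e]
        exact ciSup_le fun i => (le_runMax f y le_rfl).trans (le_ciSup hb i)
    rwa [this] at ht
  have main : ∀ m : Measure H, IsP2 m → Integrable φ m →
      Tendsto (fun n => ∫ x, runMax f n x ∂m) atTop (𝓝 (∫ x, φ x ∂m)) := by
    intro m hm im
    have := hm.1
    have hid : MemLp (fun x : H => x) 2 m := memLp_of_map hm measurable_id Measure.map_id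
    exact integral_tendsto_of_tendsto_of_monotone
      (fun n => (runMax_bddGrad hf n).integrable hid) im
      (Eventually.of_forall fun y => runMax_mono f y) (Eventually.of_forall hlim)
  exact le_of_tendsto_of_tendsto' (main μ hμ iμ) (main ρ hρ iρ)
    fun n => h _ (runMax_bddGrad hf n)

lemma convexOrder_bddGrad_le {μ ρ : Measure H} (hμ : IsP2 μ) (hρ : IsP2 ρ) (h : ConvexOrder μ ρ)
    {f : H → ℝ} (hf : BddGrad f) : ∫ x, f x ∂μ ≤ ∫ x, f x ∂ρ := by
  have := hμ.1
  have := hρ.1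
  exact h f hf.convexOn (hf.integrable (memLp_of_map hμ measurable_id Measure.map_id))
    (hf.integrable (memLp_of_map hρ measurable_id Measure.map_id))

end MaxAffine

/-! ### Monotonicity of the maximal correlation in the convex order -/

section CorrMono

variable {H : Type*} [NormedAddCommGroup H] [InnerProductSpace ℝ H] [FiniteDimensional ℝ H]
  [MeasurableSpace H] [BorelSpace H]

/-- Rockafellar's chains: the affine function obtained by following the points `p i`, `i ∈ l`
(a point is a pair `(z, x)` of a slope `z` and a position `x`), starting from `p 0`. -/
def chain (p : ℕ → H × H) : List ℕ → H → ℝ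
  | [], y => inner ℝ (p 0).1 (y - (p 0).2)
  | i :: l, y => chain p l (p i).2 + inner ℝ (p i).1 (y - (p i).2)

lemma bddGrad_chain (p : ℕ → H × H) (l : List ℕ) : BddGrad (chain p l) := by
  cases l with
  | nil =>
    have : chain p [] = fun y => inner ℝ (p 0).1 y + (- inner ℝ (p 0).1 (p 0).2) := by
      funext y
      simp only [chain, inner_sub_right]
      ring
    rw [this]
    exact bddGrad_affine _ _
  | cons i l =>
    have : chain p (i :: l) =
        fun y => inner ℝ (p i).1 y + (chain p l (p i).2 - inner ℝ (p i).1 (p i).2) := by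
      funext y
      simp only [chain, inner_sub_right]
      ring
    rw [this]
    exact bddGrad_affine _ _

lemma chain_eq_sum {Γ : Set (H × H)} {p : ℕ → H × H} (hp : ∀ i, p i ∈ Γ) (l : List ℕ) :
    ∃ (n : ℕ) (q : ℕ → H × H), (∀ i, q i ∈ Γ) ∧ q 0 = p 0 ∧ ∀ y, chain p l y =
      ∑ i ∈ Finset.range n, inner ℝ (q i).1 ((q (i + 1)).2 - (q i).2)
        + inner ℝ (q n).1 (y - (q n).2) := by
  induction l with
  | nil => exact ⟨0, fun _ => p 0, fun _ => hp 0, rfl, fun y => by simp [chain]⟩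
  | cons j l ih =>
    obtain ⟨n, q, hq, hq0, hsum⟩ := ih
    refine ⟨n + 1, fun i => if i ≤ n then q i else p j, fun i => ?_, by simpa using hq0,
      fun y => ?_⟩
    · simp only
      split_ifs
      exacts [hq i, hp j]
    · rw [chain, hsum, Finset.sum_range_succ]
      have e : ∑ i ∈ Finset.range n, inner ℝ (if i ≤ n then q i else p j).1
          ((if i + 1 ≤ n then q (i + 1) else p j).2 - (if i ≤ n then q i else p j).2) =
          ∑ i ∈ Finset.range n, inner ℝ (q i).1 ((q (i + 1)).2 - (q i).2) := by
        refine Finset.sum_congr rfl fun i hi => ?_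
        have hi' := Finset.mem_range.1 hi
        rw [if_pos hi'.le, if_pos (Nat.succ_le_of_lt hi')]
      rw [e]
      simp

/-- On a cyclically monotone set, the chains started at `p 0` are dominated. -/
lemma chain_le {α β : Measure H} (hα : IsP2 α) (hβ : IsP2 β) {π : Measure (H × H)}
    (hπ : IsCoupling π α β) (hopt : ∫ p, inner ℝ p.1 p.2 ∂π = corr α β) {p : ℕ → H × H}
    (hp : ∀ i, p i ∈ π.support) (l : List ℕ) {w : H × H} (hw : w ∈ π.support) :
    chain p l w.2 ≤ inner ℝ w.1 (w.2 - (p 0).2) := by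
  obtain ⟨n, q, hq, hq0, hsum⟩ := chain_eq_sum hp l
  rw [hsum, ← hq0]
  have h := swapGain_support (finRotate (n + 2)) hα hβ hπ hopt
    (fun i => if (i : ℕ) ≤ n then q i else w) (fun i => by
      split_ifs
      exacts [hq i, hw])
  unfold swapGain at h
  rw [Fin.sum_univ_castSucc, Fin.sum_univ_castSucc] at h
  have e : ∀ i : Fin n, inner ℝ
      (if ((i.castSucc.castSucc : Fin (n + 2)) : ℕ) ≤ n then q i.castSucc.castSucc else w).1
      ((if ((finRotate (n + 2) i.castSucc.castSucc : Fin (n + 2)) : ℕ) ≤ n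
        then q (finRotate (n + 2) i.castSucc.castSucc) else w).2 -
      (if ((i.castSucc.castSucc : Fin (n + 2)) : ℕ) ≤ n then q i.castSucc.castSucc else w).2) =
      inner ℝ (q i).1 ((q (i + 1)).2 - (q i).2) := by
    intro i
    rw [finRotate_apply, Fin.coeSucc_eq_succ]
    simp only [Fin.val_castSucc, Fin.val_succ]
    rw [if_pos i.2.le, if_pos (Nat.succ_le_of_lt i.2)]
  rw [Finset.sum_congr rfl fun i _ => e i, finRotate_last] at h
  rw [finRotate_apply, Fin.coeSucc_eq_succ] at h
  simp only [Fin.val_castSucc, Fin.val_succ, Fin.val_last, le_refl, if_true, Fin.val_zero,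
    Nat.zero_le, Nat.not_succ_le_self, if_false] at h
  rw [Fin.sum_univ_eq_sum_range (fun i => inner ℝ (q i).1 ((q (i + 1)).2 - (q i).2))] at h
  simp only [inner_sub_right] at h ⊢
  linarith

/-- The maximal correlation with a fixed law is monotone for the convex order. The optimal coupling
of the larger law is carried by the subdifferential of a convex function, the supremum of the
chains; comparing its integrals and using the subgradient inequality gives the claim. -/
lemma corr_mono {μ ρ σ : Measure H} (hμ : IsP2 μ) (hρ : IsP2 ρ) (hσ : IsP2 σ)
    (hle : ConvexOrder μ ρ) : corr μ σ ≤ corr σ ρ := by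
  obtain ⟨π₁, hπ₁, o₁⟩ := exists_opt hμ hσ
  obtain ⟨π, hπ, o⟩ := exists_opt hσ hρ
  have := hπ₁.1
  have := hπ.1
  obtain ⟨Q, hQ, hQ1, hQ2⟩ := glue π₁ π (by rw [hπ₁.2.2, hπ.2.1])
  have mY : Measurable fun ω : (H × H) × H => ω.1.1 := by fun_prop
  have mZ : Measurable fun ω : (H × H) × H => ω.1.2 := by fun_prop
  have mY' : Measurable fun ω : (H × H) × H => ω.2 := by fun_prop
  have lawY : Q.map (fun ω => ω.1.1) = μ := by
    rw [← hπ₁.2.1, ← hQ1, Measure.map_map (by fun_prop) (by fun_prop)]; rfl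
  have lawZ : Q.map (fun ω => ω.1.2) = σ := by
    rw [← hπ₁.2.2, ← hQ1, Measure.map_map (by fun_prop) (by fun_prop)]; rfl
  have lawY' : Q.map (fun ω => ω.2) = ρ := by
    rw [← hπ.2.2, ← hQ2, Measure.map_map (by fun_prop) (by fun_prop)]; rfl
  have LY := memLp_of_map hμ mY lawY
  have LZ := memLp_of_map hσ mZ lawZ
  have LY' := memLp_of_map hρ mY' lawY'
  have c₁ : ∫ ω, inner ℝ ω.1.1 ω.1.2 ∂Q = corr μ σ := by
    rw [← o₁, ← hQ1, integral_map (by fun_prop) (by fun_prop)]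
  have c₂ : ∫ ω, inner ℝ ω.1.2 ω.2 ∂Q = corr σ ρ := by
    rw [← o, ← hQ2, integral_map (by fun_prop) (by fun_prop)]
  have hne : (π.support).Nonempty := Measure.nonempty_support (IsProbabilityMeasure.ne_zero π)
  have : Nonempty π.support := hne.to_subtype
  let p : ℕ → H × H := fun i => (TopologicalSpace.denseSeq π.support i : H × H)
  have hp : ∀ i, p i ∈ π.support := fun i => (TopologicalSpace.denseSeq π.support i).2
  have hdense : π.support ⊆ closure (Set.range p) := by
    intro w hw
    have h := TopologicalSpace.denseRange_denseSeq π.support ⟨w, hw⟩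
    have h2 := image_closure_subset_closure_image continuous_subtype_val
      (Set.mem_image_of_mem Subtype.val h)
    rwa [← Set.range_comp] at h2
  let f : ℕ → H → ℝ := fun k => chain p (Denumerable.ofNat (List ℕ) k)
  have hf : ∀ k, BddGrad (f k) := fun k => bddGrad_chain p _
  have hF := runMax_bddGrad hf
  have hsupp : ∀ᵐ ω ∂Q, (ω.1.2, ω.2) ∈ π.support := by
    have h1 : ∀ᵐ w ∂π, w ∈ π.support := Measure.support_mem_ae
    rw [← hQ2] at h1
    have := ae_of_ae_map (by fun_prop) h1
    rwa [hQ2] at this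
  have key : ∀ w ∈ π.support, ∀ (y : H) (m : ℕ) (B : ℝ), (∀ k, runMax f k y ≤ B) →
      runMax f m w.2 + inner ℝ w.1 (y - w.2) ≤ B := by
    intro w hw y m B hB
    have h1 : ∀ k, f k w.2 ≤ B - inner ℝ w.1 (y - w.2) := by
      intro k
      have hcl : IsClosed {v : H × H | f k v.2 + inner ℝ v.1 (y - v.2) ≤ B} := by
        have := (hf k).continuous
        exact isClosed_le (by fun_prop) continuous_const
      have hsub : Set.range p ⊆ {v : H × H | f k v.2 + inner ℝ v.1 (y - v.2) ≤ B} := by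
        rintro _ ⟨i, rfl⟩
        have h2 := (le_runMax f y (le_refl
          (Encodable.encode (i :: Denumerable.ofNat (List ℕ) k)))).trans (hB _)
        simp only [f, Denumerable.ofNat_encode, chain] at h2
        exact h2
      have := hcl.closure_subset_iff.2 hsub (hdense hw)
      simp only [Set.mem_ofPred_eq] at this
      linarith
    linarith [runMax_le f w.2 (n := m) h1]
  -- `L` is the integral of the convex potential against the larger law
  have hbdd : BddAbove (Set.range fun k => ∫ ω, runMax f k ω.2 ∂Q) := by
    refine ⟨∫ ω, inner ℝ ω.1.2 (ω.2 - (p 0).2) ∂Q, ?_⟩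
    rintro _ ⟨k, rfl⟩
    refine integral_mono_ae ((hF k).integrable LY')
      (integrable_inner LZ (LY'.sub (memLp_const _))) ?_
    filter_upwards [hsupp] with ω hω
    exact runMax_le f _ fun i => chain_le hσ hρ hπ o hp _ hω
  set L : ℝ := ⨆ k, ∫ ω, runMax f k ω.2 ∂Q with hL
  have hYL : ∀ k, ∫ ω, runMax f k ω.1.1 ∂Q ≤ L := by
    intro k
    refine le_trans ?_ (le_ciSup hbdd k)
    have h := convexOrder_bddGrad_le hμ hρ hle (hF k)
    rw [← lawY, ← lawY', integral_map mY.aemeasurable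
      (hF k).continuous.aestronglyMeasurable, integral_map mY'.aemeasurable
      (hF k).continuous.aestronglyMeasurable] at h
    exact h
  have hm : ∀ m, ∫ ω, runMax f m ω.2 ∂Q ≤ L - (corr μ σ - corr σ ρ) := by
    intro m
    have I1 := (hF m).integrable LY'
    have I2 : Integrable (fun ω : (H × H) × H => inner ℝ ω.1.2 (ω.1.1 - ω.2)) Q :=
      integrable_inner LZ (LY.sub LY')
    have I3 : Integrable (fun ω : (H × H) × H =>
        runMax f m ω.2 + inner ℝ ω.1.2 (ω.1.1 - ω.2)) Q := I1.add I2
    have hlim := integral_tendsto_of_tendsto_of_monotone (μ := Q)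
      (f := fun k ω => min (runMax f k ω.1.1) (runMax f m ω.2 + inner ℝ ω.1.2 (ω.1.1 - ω.2)))
      (F := fun ω => runMax f m ω.2 + inner ℝ ω.1.2 (ω.1.1 - ω.2))
      (fun k => ((hF k).integrable LY).inf I3) I3
      (Eventually.of_forall fun ω k k' hkk => min_le_min_right _ (runMax_mono f _ hkk)) (by
        filter_upwards [hsupp] with ω hω
        refine tendsto_order.2 ⟨fun a ha => ?_, fun a ha => ?_⟩
        · by_contra hcon
          have hall : ∀ k, runMax f k ω.1.1 ≤ a := by
            intro k
            by_contra hk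
            push Not at hk
            refine hcon (eventually_atTop.2 ⟨k, fun k' hk' => lt_min ?_ ha⟩)
            exact hk.trans_le (runMax_mono f _ hk')
          exact absurd (key _ hω ω.1.1 m a hall) (not_le.2 ha)
        · exact Eventually.of_forall fun k => (min_le_right _ _).trans_lt ha)
    have hle' := le_of_tendsto' hlim (b := L) fun k => by
      refine le_trans (integral_mono (((hF k).integrable LY).inf I3) ((hF k).integrable LY)
        fun ω => min_le_left _ _) (hYL k)
    have e : ∫ ω, (runMax f m ω.2 + inner ℝ ω.1.2 (ω.1.1 - ω.2)) ∂Q =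
        ∫ ω, runMax f m ω.2 ∂Q + (corr μ σ - corr σ ρ) := by
      rw [integral_add I1 I2, ← c₁, ← c₂, ← integral_sub (integrable_inner LY LZ)
        (integrable_inner LZ LY')]
      congr 2
      funext ω
      rw [inner_sub_right, real_inner_comm]
    rw [e] at hle'
    linarith
  have := ciSup_le hm
  linarith

end CorrMono

/-! ### First-order condition for the metric extrapolation -/

section FirstOrder

variable {H : Type*} [NormedAddCommGroup H] [InnerProductSpace ℝ H] [FiniteDimensional ℝ H]
  [MeasurableSpace H] [BorelSpace H]

lemma isP2_smul {α : Measure H} (hα : IsP2 α) (a : ℝ) : IsP2 (α.map (fun x => a • x)) := by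
  have := hα.1
  exact isP2_map (by fun_prop) ((memLp_of_map hα measurable_id Measure.map_id).const_smul a)

lemma map_smul_smul (α : Measure H) (a b : ℝ) :
    (α.map (fun x => a • x)).map (fun x => b • x) = α.map (fun x => (b * a) • x) := by
  rw [Measure.map_map (by fun_prop) (by fun_prop)]
  congr 1
  funext x
  simp [smul_smul]

lemma map_smul_inv (α : Measure H) {a : ℝ} (ha : a ≠ 0) :
    (α.map (fun x => a⁻¹ • x)).map (fun x => a • x) = α := by
  rw [map_smul_smul, mul_inv_cancel₀ ha]
  simp

lemma m2_smul (α : Measure H) (a : ℝ) : m2 (α.map (fun x => a • x)) = a ^ 2 * m2 α := by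
  rw [m2_map (by fun_prop), m2, ← integral_const_mul]
  congr 1
  funext x
  rw [norm_smul, mul_pow, Real.norm_eq_abs, sq_abs]

lemma corr_smul_le {α β : Measure H} (hα : IsP2 α) (hβ : IsP2 β) (a : ℝ) :
    a * corr α β ≤ corr (α.map (fun x => a • x)) β := by
  obtain ⟨π, hπ, o⟩ := exists_opt hα hβ
  have := hπ.1
  have h := inner_le_corr (P := π) (X := fun p => a • p.1) (Y := fun p => p.2) (by fun_prop)
    (by fun_prop) ((hπ.memLp_fst hα).const_smul a) (hπ.memLp_snd hβ)
  have e : π.map (fun p => a • p.1) = α.map (fun x => a • x) := by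
    rw [← hπ.2.1, Measure.map_map (by fun_prop) (by fun_prop)]; rfl
  have e2 : π.map (fun p => p.2) = β := hπ.2.2
  rw [e, e2] at h
  rw [← o, ← integral_const_mul]
  simpa only [real_inner_smul_left] using h

lemma corr_smul {α β : Measure H} (hα : IsP2 α) (hβ : IsP2 β) {a : ℝ} (ha : 0 < a) :
    corr (α.map (fun x => a • x)) β = a * corr α β := by
  refine le_antisymm ?_ (corr_smul_le hα hβ a)
  have h := corr_smul_le (isP2_smul hα a) hβ a⁻¹
  rw [map_smul_smul, inv_mul_cancel₀ ha.ne'] at h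
  simp only [one_smul, Measure.map_id'] at h
  rwa [inv_mul_le_iff₀ ha] at h

/-- The functional `F` of the metric extrapolation problem, in the variable `D^{1/(t-1)}_# ρ` and up
to an affine change. -/
def potential (ν₀ μ τ : Measure H) : ℝ := m2 τ / 2 + corr τ ν₀ - corr τ μ

/-- Optimality of `σ` among its own dilations. -/
lemma potential_eq {ν₀ μ σ : Measure H} (hν₀ : IsP2 ν₀) (hμ : IsP2 μ) (hσ : IsP2 σ)
    (hG : ∀ τ, IsP2 τ → potential ν₀ μ σ ≤ potential ν₀ μ τ) :
    m2 σ + corr σ ν₀ - corr σ μ = 0 := by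
  have hm : 0 ≤ m2 σ := integral_nonneg fun _ => by positivity
  set m := m2 σ with hm'
  set c := corr σ ν₀ - corr σ μ with hc
  have key : ∀ l : ℝ, 0 < l → 0 ≤ (l - 1) * ((l + 1) / 2 * m + c) := by
    intro l hl
    have h := hG _ (isP2_smul hσ l)
    simp only [potential, m2_smul, corr_smul hσ hν₀ hl, corr_smul hσ hμ hl, ← hm'] at h
    have e : (l - 1) * ((l + 1) / 2 * m + c) =
        (l ^ 2 * m / 2 + l * corr σ ν₀ - l * corr σ μ) - (m / 2 + corr σ ν₀ - corr σ μ) := by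
      rw [hc]; ring
    rw [e]
    linarith
  have h1 : 0 ≤ m + c := by
    refine le_of_forall_pos_le_add fun ε hε => ?_
    have hd : 0 < ε / (m + 1) := by positivity
    have h := key (1 + ε / (m + 1)) (by linarith)
    rw [add_sub_cancel_left] at h
    have h2 := nonneg_of_mul_nonneg_right h hd
    have h3 : ε / (m + 1) * m ≤ ε := by
      rw [div_mul_eq_mul_div, div_le_iff₀ (by linarith)]
      nlinarith
    nlinarith [mul_nonneg hd.le hm]
  have h2 : m + c ≤ 0 := by
    refine le_of_forall_pos_le_add fun ε hε => ?_
    have hd : 0 < min (1 / 2) (ε / (m + 1)) := by positivity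
    set δ := min (1 / 2) (ε / (m + 1)) with hδ
    have hδ1 : δ ≤ 1 / 2 := min_le_left _ _
    have hδ2 : δ * (m + 1) ≤ ε := by
      rw [← le_div_iff₀ (by linarith)]
      exact min_le_right _ _
    have h := key (1 - δ) (by linarith)
    have h3 : (1 - δ + 1) / 2 * m + c ≤ 0 := by
      by_contra hcon
      push Not at hcon
      have : (1 - δ - 1) * ((1 - δ + 1) / 2 * m + c) < 0 := by
        apply mul_neg_of_neg_of_pos _ hcon
        linarith
      linarith
    nlinarith [mul_nonneg hd.le hm]
  rw [add_sub_assoc, ← hc]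
  linarith

/-- Moving `σ` in the direction of a bounded subgradient of `h` produces couplings of `ν₀` and `σ`
that are almost optimal and for which `h` almost increases in passing from `μ` to the law of the
sum. -/
lemma perturb {ν₀ μ σ : Measure H} (hν₀ : IsP2 ν₀) (hμ : IsP2 μ) (hσ : IsP2 σ)
    (hG : ∀ τ, IsP2 τ → potential ν₀ μ σ ≤ potential ν₀ μ τ) {h : H → ℝ} (hh : BddGrad h) :
    ∃ C : ℝ, ∀ s : ℝ, 0 < s → s ≤ 1 → ∃ κ : Measure (H × H), IsCoupling κ ν₀ σ ∧
      ∫ y, h y ∂μ - s * C ≤ ∫ p, h (p.1 + p.2) ∂κ ∧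
      corr ν₀ σ - s * C ≤ ∫ p, inner ℝ p.1 p.2 ∂κ := by
  have hhc := hh.continuous
  have hh' := hh
  obtain ⟨w, K, wm, hK, hw⟩ := hh'
  have hK0 : 0 ≤ K := (norm_nonneg _).trans (hK 0)
  have n0 : 0 ≤ m2 ν₀ := integral_nonneg fun _ => by positivity
  have n1 : 0 ≤ m2 μ := integral_nonneg fun _ => by positivity
  have n2 : 0 ≤ m2 σ := integral_nonneg fun _ => by positivity
  refine ⟨3 / 2 * (m2 ν₀ + m2 μ + m2 σ) + K ^ 2, fun s hs hs1 => ?_⟩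
  obtain ⟨π₁, hπ₁, o₁⟩ := exists_opt hμ hσ
  have := hπ₁.1
  let T : H × H → H := fun p => p.2 + s • w p.1
  have hT : Measurable T := by fun_prop
  have LW₁ : MemLp (fun p : H × H => w p.1) 2 π₁ :=
    MemLp.of_bound (wm.comp measurable_fst).aestronglyMeasurable K
      (Eventually.of_forall fun p => hK p.1)
  have hP2 : IsP2 (π₁.map T) :=
    isP2_map hT ((hπ₁.memLp_snd hσ).add (LW₁.const_smul s))
  obtain ⟨πn, hπn, on⟩ := exists_opt hν₀ hP2
  have := hπn.1
  have : IsProbabilityMeasure (π₁.map fun p => (T p, p)) :=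
    Measure.isProbabilityMeasure_map (by fun_prop)
  obtain ⟨Q, hQ, hQ1, hQ2⟩ := glue πn (π₁.map fun p => (T p, p)) (by
    rw [hπn.2.2, Measure.map_map (by fun_prop) (by fun_prop)]; rfl)
  have hQ3 : Q.map (fun ω => ω.2) = π₁ := by
    have : Q.map (fun ω => ω.2) = (Q.map (fun ω => (ω.1.2, ω.2))).map Prod.snd := by
      rw [Measure.map_map (by fun_prop) (by fun_prop)]; rfl
    rw [this, hQ2, Measure.map_map (by fun_prop) (by fun_prop)]
    exact Measure.map_id
  have hU : ∀ᵐ ω ∂Q, ω.1.2 = T ω.2 := by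
    have h1 : ∀ᵐ q ∂(π₁.map fun p => (T p, p)), q.1 = T q.2 := by
      rw [ae_map_iff (by fun_prop) (measurableSet_eq_fun (by fun_prop) (by fun_prop))]
      exact Eventually.of_forall fun p => rfl
    rw [← hQ2] at h1
    exact ae_of_ae_map (by fun_prop) h1
  have mX : Measurable fun ω : (H × H) × (H × H) => ω.1.1 := by fun_prop
  have mY : Measurable fun ω : (H × H) × (H × H) => ω.2.1 := by fun_prop
  have mZ : Measurable fun ω : (H × H) × (H × H) => ω.2.2 := by fun_prop
  have mW : Measurable fun ω : (H × H) × (H × H) => w ω.2.1 := by fun_prop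
  have lawX : Q.map (fun ω => ω.1.1) = ν₀ := by
    rw [← hπn.2.1, ← hQ1, Measure.map_map (by fun_prop) (by fun_prop)]; rfl
  have lawY : Q.map (fun ω => ω.2.1) = μ := by
    rw [← hπ₁.2.1, ← hQ3, Measure.map_map (by fun_prop) (by fun_prop)]; rfl
  have lawZ : Q.map (fun ω => ω.2.2) = σ := by
    rw [← hπ₁.2.2, ← hQ3, Measure.map_map (by fun_prop) (by fun_prop)]; rfl
  have lawU : Q.map (fun ω => ω.2.2 + s • w ω.2.1) = π₁.map T := by
    rw [← hQ3, Measure.map_map (by fun_prop) (by fun_prop)]; rfl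
  have LX := memLp_of_map hν₀ mX lawX
  have LY := memLp_of_map hμ mY lawY
  have LZ := memLp_of_map hσ mZ lawZ
  have LW : MemLp (fun ω : (H × H) × (H × H) => w ω.2.1) 2 Q :=
    MemLp.of_bound mW.aestronglyMeasurable K (Eventually.of_forall fun p => hK _)
  have IXZ := integrable_inner LX LZ
  have IXW := integrable_inner LX LW
  have IYZ := integrable_inner LY LZ
  have IYW := integrable_inner LY LW
  have IZW := integrable_inner LZ LW
  have e1 : corr ν₀ (π₁.map T) =
      ∫ ω, inner ℝ ω.1.1 ω.2.2 ∂Q + s * ∫ ω, inner ℝ ω.1.1 (w ω.2.1) ∂Q := by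
    rw [← on, ← hQ1, integral_map (by fun_prop) (by fun_prop), ← integral_const_mul,
      ← integral_add IXZ (IXW.const_mul s)]
    refine integral_congr_ae ?_
    filter_upwards [hU] with ω hω
    rw [hω, inner_add_right, inner_smul_right]
  have e2 : corr μ σ + s * ∫ ω, inner ℝ ω.2.1 (w ω.2.1) ∂Q ≤ corr μ (π₁.map T) := by
    have h1 := inner_le_corr (P := Q) (X := fun ω => ω.2.1)
      (Y := fun ω => ω.2.2 + s • w ω.2.1) mY (by fun_prop) LY (LZ.add (LW.const_smul s))
    rw [lawY, lawU] at h1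
    refine le_of_eq_of_le ?_ h1
    have : corr μ σ = ∫ ω, inner ℝ ω.2.1 ω.2.2 ∂Q := by
      rw [← o₁, ← hQ3, integral_map (by fun_prop) (by fun_prop)]
    rw [this, ← integral_const_mul, ← integral_add IYZ (IYW.const_mul s)]
    congr 1
    funext ω
    rw [inner_add_right, inner_smul_right]
  have e3 : m2 (π₁.map T) = m2 σ + s ^ 2 * ∫ ω, ‖w ω.2.1‖ ^ 2 ∂Q +
      2 * (s * ∫ ω, inner ℝ ω.2.2 (w ω.2.1) ∂Q) := by
    rw [← lawU, m2_map (by fun_prop)]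
    have h1 := integral_normsq_add LZ (LW.const_smul s)
    simp only [Pi.smul_apply, inner_smul_right, norm_smul, mul_pow, Real.norm_eq_abs, sq_abs,
      integral_const_mul] at h1
    rw [h1, ← lawZ, m2_map mZ]
  have e4 : ∫ ω, inner ℝ ω.1.1 ω.2.2 ∂Q ≤ corr ν₀ σ := by
    have h1 := inner_le_corr (P := Q) mX mZ LX LZ
    rwa [lawX, lawZ] at h1
  have e5 : ∫ ω, ‖w ω.2.1‖ ^ 2 ∂Q ≤ K ^ 2 := by
    have h1 : ∫ ω, ‖w ω.2.1‖ ^ 2 ∂Q ≤ ∫ _ω : (H × H) × (H × H), K ^ 2 ∂Q :=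
      integral_mono (integrable_normsq LW) (integrable_const _) fun ω =>
        pow_le_pow_left₀ (norm_nonneg _) (hK _) 2
    simpa using h1
  set A := ∫ ω, inner ℝ (ω.1.1 + ω.2.2 - ω.2.1) (w ω.2.1) ∂Q with hA
  have e6 : A = ∫ ω, inner ℝ ω.1.1 (w ω.2.1) ∂Q + ∫ ω, inner ℝ ω.2.2 (w ω.2.1) ∂Q
      - ∫ ω, inner ℝ ω.2.1 (w ω.2.1) ∂Q := by
    have i12 : Integrable (fun ω : (H × H) × (H × H) =>
      inner ℝ ω.1.1 (w ω.2.1) + inner ℝ ω.2.2 (w ω.2.1)) Q := IXW.add IZW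
    rw [← integral_add IXW IZW, ← integral_sub i12 IYW]
    simp only [hA, inner_sub_left, inner_add_left]
  have e7 : A ≤ 3 / 2 * (m2 ν₀ + m2 μ + m2 σ) + K ^ 2 / 2 := by
    have jX := integrable_normsq LX
    have jY := integrable_normsq LY
    have jZ := integrable_normsq LZ
    have j1 : Integrable (fun ω : (H × H) × (H × H) => ‖ω.1.1‖ ^ 2 + ‖ω.2.1‖ ^ 2) Q := jX.add jY
    have j2 : Integrable (fun ω : (H × H) × (H × H) =>
      ‖ω.1.1‖ ^ 2 + ‖ω.2.1‖ ^ 2 + ‖ω.2.2‖ ^ 2) Q := j1.add jZ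
    have j3 : Integrable (fun ω : (H × H) × (H × H) =>
      3 / 2 * (‖ω.1.1‖ ^ 2 + ‖ω.2.1‖ ^ 2 + ‖ω.2.2‖ ^ 2)) Q := j2.const_mul _
    have h1 : A ≤ ∫ ω, (3 / 2 * (‖ω.1.1‖ ^ 2 + ‖ω.2.1‖ ^ 2 + ‖ω.2.2‖ ^ 2) + K ^ 2 / 2) ∂Q := by
      refine integral_mono (integrable_inner ((LX.add LZ).sub LY) LW)
        (j3.add (integrable_const _)) fun ω => ?_
      simp only
      have a1 := real_inner_le_norm (ω.1.1 + ω.2.2 - ω.2.1) (w ω.2.1)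
      have a2 : ‖ω.1.1 + ω.2.2 - ω.2.1‖ ≤ ‖ω.1.1‖ + ‖ω.2.2‖ + ‖ω.2.1‖ :=
        (norm_sub_le _ _).trans (by gcongr; exact norm_add_le _ _)
      have a3 := mul_le_mul a2 (hK ω.2.1) (norm_nonneg _) (by positivity)
      nlinarith [sq_nonneg (‖ω.1.1‖ + ‖ω.2.2‖ + ‖ω.2.1‖ - K), sq_nonneg (‖ω.1.1‖ - ‖ω.2.2‖),
        sq_nonneg (‖ω.1.1‖ - ‖ω.2.1‖), sq_nonneg (‖ω.2.2‖ - ‖ω.2.1‖)]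
    rw [integral_add j3 (integrable_const _), integral_const_mul, integral_add j1 jZ,
      integral_add jX jY, ← m2_map mX, ← m2_map mY, ← m2_map mZ, lawX, lawY, lawZ] at h1
    simpa using h1
  have e8 := hG _ hP2
  simp only [potential] at e8
  rw [corr_comm (π₁.map T) ν₀, corr_comm (π₁.map T) μ, corr_comm σ ν₀, corr_comm σ μ, e1, e3] at e8
  set N2 := ∫ ω, ‖w ω.2.1‖ ^ 2 ∂Q
  set J := ∫ ω, inner ℝ ω.1.1 ω.2.2 ∂Q
  have e9 : 0 ≤ s * A + s ^ 2 / 2 * N2 + (J - corr ν₀ σ) := by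
    rw [e6]
    linarith
  have e10 : s ^ 2 / 2 * N2 ≤ s * (s * K ^ 2 / 2) := by
    have := mul_le_mul_of_nonneg_left e5 (by positivity : 0 ≤ s ^ 2 / 2)
    linarith
  have e11 : s * K ^ 2 / 2 ≤ K ^ 2 / 2 := by nlinarith [sq_nonneg K]
  refine ⟨Q.map fun ω => (ω.1.1, ω.2.2), ?_, ?_, ?_⟩
  · have := isCoupling_map (P := Q) mX mZ
    rwa [lawX, lawZ] at this
  · rw [integral_map (by fun_prop) (by fun_prop)]
    have b1 : - (s * K ^ 2 / 2) ≤ A := by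
      have : 0 ≤ s * (A + s * K ^ 2 / 2) := by linarith
      have := nonneg_of_mul_nonneg_right this hs
      linarith
    have b2 : ∫ ω, h ω.2.1 ∂Q + A ≤ ∫ ω, h (ω.1.1 + ω.2.2) ∂Q := by
      have I1 : Integrable (fun ω : (H × H) × (H × H) => h ω.2.1) Q := hh.integrable LY
      have I2 : Integrable (fun ω : (H × H) × (H × H) =>
        inner ℝ (ω.1.1 + ω.2.2 - ω.2.1) (w ω.2.1)) Q := integrable_inner ((LX.add LZ).sub LY) LW
      have I3 : Integrable (fun ω : (H × H) × (H × H) => h (ω.1.1 + ω.2.2)) Q :=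
        hh.integrable (LX.add LZ)
      rw [hA, ← integral_add I1 I2]
      refine integral_mono (I1.add I2) I3 fun ω => ?_
      have := hw ω.2.1 (ω.1.1 + ω.2.2)
      rw [real_inner_comm] at this
      exact this
    have b3 : ∫ ω, h ω.2.1 ∂Q = ∫ y, h y ∂μ := by
      rw [← lawY, integral_map (by fun_prop) (by fun_prop)]
    rw [b3] at b2
    have b4 : s * K ^ 2 / 2 ≤ s * (3 / 2 * (m2 ν₀ + m2 μ + m2 σ) + K ^ 2) := by
      nlinarith [mul_nonneg hs.le n0, mul_nonneg hs.le n1, mul_nonneg hs.le n2,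
        mul_nonneg hs.le (sq_nonneg K)]
    linarith
  · rw [integral_map (by fun_prop) (by fun_prop)]
    change _ ≤ J
    have b1 : s * A + s ^ 2 / 2 * N2 ≤ s * (3 / 2 * (m2 ν₀ + m2 μ + m2 σ) + K ^ 2) := by
      have := mul_le_mul_of_nonneg_left (add_le_add e7 e11) hs.le
      linarith
    linarith

/-- If `σ` minimizes the potential, then the sum of `ν₀` and `σ` along their optimal coupling
dominates `μ` in the convex order. -/
lemma le_law_add (ν : Measure H) [ν.IsAddHaarMeasure] {ν₀ μ σ : Measure H} (hν₀ : IsP2 ν₀)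
    (hac : ν₀ ≪ ν) (hμ : IsP2 μ) (hσ : IsP2 σ)
    (hG : ∀ τ, IsP2 τ → potential ν₀ μ σ ≤ potential ν₀ μ τ) {π : Measure (H × H)}
    (hπ : IsCoupling π ν₀ σ) (o : ∫ p, inner ℝ p.1 p.2 ∂π = corr ν₀ σ) :
    ConvexOrder μ (π.map fun p => p.1 + p.2) := by
  have := hπ.1
  have hρ : IsP2 (π.map fun p => p.1 + p.2) :=
    isP2_map (by fun_prop) ((hπ.memLp_fst hν₀).add (hπ.memLp_snd hσ))
  refine convexOrder_of_bddGrad hμ hρ fun h hh => ?_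
  have hhc := hh.continuous
  rw [integral_map (by fun_prop) (by fun_prop)]
  obtain ⟨C, hC⟩ := perturb hν₀ hμ hσ hG hh
  choose κ hκ1 hκ2 hκ3 using fun n : ℕ => hC (1 / ((n : ℝ) + 1)) (by positivity) (by
    rw [div_le_one (by positivity)]
    linarith [(Nat.cast_nonneg n : (0 : ℝ) ≤ n)])
  obtain ⟨π', hπ', U, hU, hlim⟩ := coupling_compact hν₀ hσ κ hκ1
  have hs : ∀ B : ℝ, Tendsto (fun n : ℕ => B - 1 / ((n : ℝ) + 1) * C) U (𝓝 B) := by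
    intro B
    have h1 := (tendsto_one_div_add_atTop_nhds_zero_nat (𝕜 := ℝ)).mono_left hU
    simpa using (h1.mul_const C).const_sub B
  have l1 := hlim _ (by fun_prop) ⟨1, abs_inner_growth⟩
  have l2 := hlim (fun p => h (p.1 + p.2)) (by fun_prop) (by
    obtain ⟨K, hK, hg⟩ := hh.growth
    refine ⟨|h 0| + K, fun p => (hg _).trans ?_⟩
    have h1 := norm_add_le p.1 p.2
    have h2 : ‖p.1‖ + ‖p.2‖ ≤ 1 + ‖p.1‖ ^ 2 + ‖p.2‖ ^ 2 := by
      nlinarith [sq_nonneg (‖p.1‖ - 1), sq_nonneg (‖p.2‖ - 1), sq_nonneg ‖p.1‖, sq_nonneg ‖p.2‖]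
    have h3 := mul_le_mul_of_nonneg_left (h1.trans h2) hK
    have h4 : |h 0| * 1 ≤ |h 0| * (1 + ‖p.1‖ ^ 2 + ‖p.2‖ ^ 2) := by
      gcongr
      nlinarith [sq_nonneg ‖p.1‖, sq_nonneg ‖p.2‖]
    linarith)
  have o' : ∫ p, inner ℝ p.1 p.2 ∂π' = corr ν₀ σ :=
    le_antisymm (hπ'.inner_le hν₀ hσ) (le_of_tendsto_of_tendsto' (hs _) l1 hκ3)
  rw [unique_opt ν hν₀ hσ hac hπ hπ' o o']
  exact le_of_tendsto_of_tendsto' (hs _) l2 hκ2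

end FirstOrder

/-! ### The forward projection -/

section Projection

variable {H : Type*} [NormedAddCommGroup H] [InnerProductSpace ℝ H] [FiniteDimensional ℝ H]
  [MeasurableSpace H] [BorelSpace H]

lemma W2_sq (α β : Measure H) : W2 α β ^ 2 = W2sq α β := Real.sq_sqrt (W2sq_nonneg α β)

lemma W2_nonneg (α β : Measure H) : 0 ≤ W2 α β := Real.sqrt_nonneg _

lemma W2_comm (α β : Measure H) : W2 α β = W2 β α := by
  unfold W2
  rw [W2sq_comm]

/-- Optimal couplings of `(α, β)` and of `(β, γ)`, realized on one probability space with the same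
middle variable. -/
lemma exists_glue {α β γ : Measure H} (hα : IsP2 α) (hβ : IsP2 β) (hγ : IsP2 γ) :
    ∃ Q : Measure ((H × H) × H), IsProbabilityMeasure Q ∧ Q.map (fun ω => ω.1.1) = α ∧
      Q.map (fun ω => ω.1.2) = β ∧ Q.map (fun ω => ω.2) = γ ∧
      ∫ ω, inner ℝ ω.1.1 ω.1.2 ∂Q = corr α β ∧ ∫ ω, inner ℝ ω.1.2 ω.2 ∂Q = corr β γ := by
  obtain ⟨π₁, h₁, o₁⟩ := exists_opt hα hβ
  obtain ⟨π₂, h₂, o₂⟩ := exists_opt hβ hγ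
  have := h₁.1
  have := h₂.1
  obtain ⟨Q, hQ, hQ1, hQ2⟩ := glue π₁ π₂ (by rw [h₁.2.2, h₂.2.1])
  refine ⟨Q, hQ, ?_, ?_, ?_, ?_, ?_⟩
  · rw [← h₁.2.1, ← hQ1, Measure.map_map (by fun_prop) (by fun_prop)]; rfl
  · rw [← h₁.2.2, ← hQ1, Measure.map_map (by fun_prop) (by fun_prop)]; rfl
  · rw [← h₂.2.2, ← hQ2, Measure.map_map (by fun_prop) (by fun_prop)]; rfl
  · rw [← o₁, ← hQ1, integral_map (by fun_prop) (by fun_prop)]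
  · rw [← o₂, ← hQ2, integral_map (by fun_prop) (by fun_prop)]

lemma ae_eq_zero_of_integral_normsq {Ω : Type*} [MeasurableSpace Ω] {P : Measure Ω} {X : Ω → H}
    (hX : MemLp X 2 P) (h : ∫ ω, ‖X ω‖ ^ 2 ∂P ≤ 0) : ∀ᵐ ω ∂P, X ω = 0 := by
  have h0 : ∫ ω, ‖X ω‖ ^ 2 ∂P = 0 := le_antisymm h (integral_nonneg fun _ => by positivity)
  have h1 := (integral_eq_zero_iff_of_nonneg (fun _ => by positivity) (integrable_normsq hX)).1 h0
  filter_upwards [h1] with ω hω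
  simpa using hω

/-- The forward projection is the law of the sum of `ν₀` and the minimizer `σ` of the potential
along an optimal coupling: optimality of `σ` bounds the projection distance from below by the
second moment of `σ`, and the law of the sum attains this bound. -/
lemma forward_eq (ν : Measure H) [ν.IsAddHaarMeasure] {ν₀ μ σ ρ : Measure H} (hν₀ : IsP2 ν₀)
    (hac : ν₀ ≪ ν) (hμ : IsP2 μ) (hσ : IsP2 σ)
    (hG : ∀ τ, IsP2 τ → potential ν₀ μ σ ≤ potential ν₀ μ τ) (hF : IsForwardProj μ ν₀ ρ) :
    ∃ κ : Measure (H × H), IsCoupling κ ν₀ σ ∧ ∫ p, inner ℝ p.1 p.2 ∂κ = corr ν₀ σ ∧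
      ρ = κ.map fun p => p.1 + p.2 := by
  obtain ⟨hρ, hle, hmin⟩ := hF
  have hdist : W2sq ν₀ ρ ≤ m2 σ := by
    obtain ⟨π, hπ, o⟩ := exists_opt hν₀ hσ
    have := hπ.1
    have hP : IsP2 (π.map fun p => p.1 + p.2) :=
      isP2_map (by fun_prop) ((hπ.memLp_fst hν₀).add (hπ.memLp_snd hσ))
    have h1 := hmin _ hP (le_law_add ν hν₀ hac hμ hσ hG hπ o)
    have h2 := pow_le_pow_left₀ (W2_nonneg _ _) h1 2
    rw [W2_sq, W2_sq] at h2
    have h3 := W2sq_le (P := π) (X := fun p => p.1 + p.2) (Y := fun p => p.1)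
      (by fun_prop) (by fun_prop)
    have e : π.map (fun p => p.1) = ν₀ := hπ.2.1
    have e2 : π.map (fun p => p.2) = σ := hπ.2.2
    rw [e] at h3
    simp only [add_sub_cancel_left] at h3
    rw [← m2_map (P := π) measurable_snd, hπ.2.2] at h3
    rw [W2sq_comm]
    exact h2.trans h3
  obtain ⟨Q, hQ, lawX, lawY, lawZ, oXY, oYZ⟩ := exists_glue hν₀ hρ hσ
  have LX := memLp_of_map hν₀ (by fun_prop) lawX
  have LY := memLp_of_map hρ (by fun_prop) lawY
  have LZ := memLp_of_map hσ (by fun_prop) lawZ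
  have hc := corr_mono hμ hρ hσ hle
  have hp := potential_eq hν₀ hμ hσ hG
  have hXZ : ∫ ω, inner ℝ ω.1.1 ω.2 ∂Q ≤ corr ν₀ σ := by
    have h1 := inner_le_corr (P := Q) (by fun_prop) (by fun_prop) LX LZ
    rwa [lawX, lawZ] at h1
  have e1 : ∫ ω, ‖ω.1.2 - ω.1.1‖ ^ 2 ∂Q = W2sq ν₀ ρ := by
    rw [integral_normsq_sub LY LX, W2sq_eq, ← oXY, ← m2_map (P := Q) (by fun_prop),
      ← m2_map (P := Q) (by fun_prop), lawX, lawY]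
    simp only [real_inner_comm]
    ring
  have e2 : ∫ ω, ‖(ω.1.2 - ω.1.1) - ω.2‖ ^ 2 ∂Q =
      W2sq ν₀ ρ + m2 σ - 2 * (corr ρ σ - ∫ ω, inner ℝ ω.1.1 ω.2 ∂Q) := by
    have h1 := integral_normsq_sub (LY.sub LX) LZ
    simp only [Pi.sub_apply] at h1
    rw [h1, e1, ← m2_map (P := Q) (by fun_prop), lawZ, ← oYZ,
      ← integral_sub (integrable_inner LY LZ) (integrable_inner LX LZ)]
    simp only [inner_sub_left]
  rw [corr_comm σ ρ, corr_comm μ σ] at hc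
  rw [corr_comm σ ν₀] at hp
  have hz := ae_eq_zero_of_integral_normsq (X := fun ω : (H × H) × H => (ω.1.2 - ω.1.1) - ω.2)
    ((LY.sub LX).sub LZ) (by rw [e2]; linarith)
  have hnn : 0 ≤ ∫ ω, ‖(ω.1.2 - ω.1.1) - ω.2‖ ^ 2 ∂Q := integral_nonneg fun _ => by positivity
  refine ⟨Q.map fun ω => (ω.1.1, ω.2), ?_, ?_, ?_⟩
  · have h1 := isCoupling_map (P := Q) (X := fun ω => ω.1.1) (Y := fun ω => ω.2)
      (by fun_prop) (by fun_prop)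
    rwa [lawX, lawZ] at h1
  · rw [integral_map (by fun_prop) (by fun_prop)]
    linarith
  · rw [Measure.map_map (by fun_prop) (by fun_prop), ← lawY]
    apply Measure.map_congr
    filter_upwards [hz] with ω hω
    rw [sub_sub, sub_eq_zero] at hω
    exact hω

end Projection

/-! ### Geodesics -/

section Geodesic

variable {H : Type*} [NormedAddCommGroup H] [InnerProductSpace ℝ H] [FiniteDimensional ℝ H]
  [MeasurableSpace H] [BorelSpace H]

lemma W2_triangle {α β γ : Measure H} (hα : IsP2 α) (hβ : IsP2 β) (hγ : IsP2 γ) :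
    W2 α γ ≤ W2 α β + W2 β γ := by
  obtain ⟨Q, hQ, lawX, lawY, lawZ, oXY, oYZ⟩ := exists_glue hα hβ hγ
  have LX := memLp_of_map hα (by fun_prop) lawX
  have LY := memLp_of_map hβ (by fun_prop) lawY
  have LZ := memLp_of_map hγ (by fun_prop) lawZ
  have LU : MemLp (fun ω : (H × H) × H => ω.1.1 - ω.1.2) 2 Q := LX.sub LY
  have LV : MemLp (fun ω : (H × H) × H => ω.1.2 - ω.2) 2 Q := LY.sub LZ
  have eU : ∫ ω, ‖ω.1.1 - ω.1.2‖ ^ 2 ∂Q = W2 α β ^ 2 := by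
    rw [W2_sq, integral_normsq_sub LX LY, W2sq_eq, ← oXY, ← m2_map (P := Q) (by fun_prop),
      ← m2_map (P := Q) (by fun_prop), lawX, lawY]
  have eV : ∫ ω, ‖ω.1.2 - ω.2‖ ^ 2 ∂Q = W2 β γ ^ 2 := by
    rw [W2_sq, integral_normsq_sub LY LZ, W2sq_eq, ← oYZ, ← m2_map (P := Q) (by fun_prop),
      ← m2_map (P := Q) (by fun_prop), lawY, lawZ]
  set c := ∫ ω, inner ℝ (ω.1.1 - ω.1.2) (ω.1.2 - ω.2) ∂Q with hc
  have h1 := W2sq_le (P := Q) (X := fun ω => ω.1.1) (Y := fun ω => ω.2) (by fun_prop) (by fun_prop)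
  rw [lawX, lawZ, ← W2_sq] at h1
  have h2 := integral_normsq_add LU LV
  simp only [sub_add_sub_cancel] at h2
  rw [h2, eU, eV, ← hc] at h1
  have h3 : discrim (W2 α β ^ 2) (2 * c) (W2 β γ ^ 2) ≤ 0 := by
    refine discrim_le_zero fun r => ?_
    have h4 := integral_normsq_add (LU.const_smul r) LV
    simp only [Pi.smul_apply, inner_smul_left, norm_smul, mul_pow, Real.norm_eq_abs, sq_abs,
      integral_const_mul, conj_trivial] at h4
    rw [eU, eV, ← hc] at h4
    have h5 : 0 ≤ ∫ ω, ‖r • (ω.1.1 - ω.1.2) + (ω.1.2 - ω.2)‖ ^ 2 ∂Q :=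
      integral_nonneg fun _ => by positivity
    nlinarith
  have h6 : c ≤ W2 α β * W2 β γ := by
    refine le_of_sq_le_sq ?_ (mul_nonneg (W2_nonneg _ _) (W2_nonneg _ _))
    unfold discrim at h3
    nlinarith
  refine le_of_sq_le_sq ?_ (add_nonneg (W2_nonneg _ _) (W2_nonneg _ _))
  nlinarith

/-- Displacement interpolation along a coupling, parametrized by `[0, t]`. -/
def interp (κ : Measure (H × H)) (t s : ℝ) : Measure H :=
  κ.map fun p => p.1 + (s / t) • (p.2 - p.1)

lemma interp_zero {α β : Measure H} {κ : Measure (H × H)} (hκ : IsCoupling κ α β) (t : ℝ) :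
    interp κ t 0 = α := by
  unfold interp
  simp only [zero_div, zero_smul, add_zero]
  exact hκ.2.1

lemma interp_self {α β : Measure H} {κ : Measure (H × H)} (hκ : IsCoupling κ α β) {t : ℝ}
    (ht : 0 < t) : interp κ t t = β := by
  unfold interp
  simp only [div_self ht.ne', one_smul, add_sub_cancel]
  exact hκ.2.2

lemma opt_cost {α β : Measure H} (hα : IsP2 α) (hβ : IsP2 β) {κ : Measure (H × H)}
    (hκ : IsCoupling κ α β) (o : ∫ p, inner ℝ p.1 p.2 ∂κ = corr α β) :
    ∫ p, ‖p.1 - p.2‖ ^ 2 ∂κ = W2 α β ^ 2 := by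
  rw [hκ.cost hα hβ, o, W2_sq, W2sq_eq]

lemma interp_isGeodesic {α β : Measure H} (hα : IsP2 α) (hβ : IsP2 β) {κ : Measure (H × H)}
    (hκ : IsCoupling κ α β) (o : ∫ p, inner ℝ p.1 p.2 ∂κ = corr α β) {t : ℝ} (ht : 0 < t) :
    IsGeodesic 0 t (interp κ t) := by
  have := hκ.1
  have hP : ∀ s, IsP2 (interp κ t s) := fun s =>
    isP2_map (by fun_prop) ((hκ.memLp_fst hα).add
      (((hκ.memLp_snd hβ).sub (hκ.memLp_fst hα)).const_smul (s / t)))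
  have hup : ∀ s₁ s₂, W2 (interp κ t s₁) (interp κ t s₂) ≤ |s₁ - s₂| / t * W2 α β := by
    intro s₁ s₂
    refine le_of_sq_le_sq ?_ (mul_nonneg (by positivity) (W2_nonneg _ _))
    rw [W2_sq]
    refine (W2sq_le (P := κ) (by fun_prop) (by fun_prop)).trans_eq ?_
    rw [mul_pow, ← opt_cost hα hβ hκ o, ← integral_const_mul]
    congr 1
    funext p
    have e : p.1 + (s₁ / t) • (p.2 - p.1) - (p.1 + (s₂ / t) • (p.2 - p.1)) =
        ((s₂ - s₁) / t) • (p.1 - p.2) := by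
      rw [sub_div]
      module
    rw [e, norm_smul, mul_pow, Real.norm_eq_abs, abs_div, abs_of_pos ht, abs_sub_comm]
  have hlow : ∀ s₁ s₂, 0 ≤ s₁ → s₁ ≤ s₂ → s₂ ≤ t →
      |s₁ - s₂| / t * W2 α β ≤ W2 (interp κ t s₁) (interp κ t s₂) := by
    intro s₁ s₂ h1 h2 h3
    have t1 := W2_triangle hα (hP s₁) hβ
    have t2 := W2_triangle (hP s₁) (hP s₂) hβ
    have u1 := hup 0 s₁
    have u2 := hup s₂ t
    rw [interp_zero hκ] at u1
    rw [interp_self hκ ht] at u2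
    rw [abs_sub_comm, sub_zero, abs_of_nonneg h1] at u1
    rw [abs_sub_comm, abs_of_nonneg (by linarith)] at u2
    rw [abs_sub_comm, abs_of_nonneg (by linarith)]
    have e : (s₂ - s₁) / t * W2 α β = W2 α β - s₁ / t * W2 α β - (t - s₂) / t * W2 α β := by
      field_simp
      ring
    rw [e]
    linarith
  refine ⟨fun s _ => hP s, fun s₁ hs₁ s₂ hs₂ => ?_⟩
  rw [interp_zero hκ, interp_self hκ ht, sub_zero]
  refine le_antisymm (hup _ _) ?_
  rcases le_total s₁ s₂ with h | h
  · exact hlow _ _ hs₁.1 h hs₂.2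
  · rw [W2_comm (interp κ t s₁), abs_sub_comm]
    exact hlow _ _ hs₂.1 h hs₁.2

/-- Geodesics issued from an absolutely continuous measure are determined by their endpoints: at an
intermediate time the equality case of the parallelogram-type identity places the middle variable on
the segment between the endpoints, and the endpoints are then optimally coupled. -/
lemma geodesic_unique (ν : Measure H) [ν.IsAddHaarMeasure] {α β : Measure H} (hα : IsP2 α)
    (hβ : IsP2 β) (hac : α ≪ ν) {κ : Measure (H × H)} (hκ : IsCoupling κ α β)
    (o : ∫ p, inner ℝ p.1 p.2 ∂κ = corr α β) {t : ℝ} (ht : 0 < t) {γ : ℝ → Measure H}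
    (hγ : IsGeodesic 0 t γ) (h0 : γ 0 = α) (h1 : γ t = β) {s : ℝ} (hs : s ∈ Set.Icc 0 t) :
    γ s = interp κ t s := by
  rcases eq_or_lt_of_le hs.1 with rfl | hs0
  · rw [h0, interp_zero hκ]
  rcases eq_or_lt_of_le hs.2 with rfl | hst
  · rw [h1, interp_self hκ ht]
  have hP := hγ.1 s hs
  have d1 := hγ.2 0 ⟨le_rfl, ht.le⟩ s hs
  have d2 := hγ.2 s hs t ⟨ht.le, le_rfl⟩
  rw [h0, h1, sub_zero, abs_sub_comm, sub_zero, abs_of_pos hs0] at d1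
  rw [h0, h1, sub_zero, abs_sub_comm, abs_of_pos (by linarith)] at d2
  set l := s / t with hl
  have hl0 : 0 < l := div_pos hs0 ht
  have hl1 : l < 1 := (div_lt_one ht).2 hst
  have e0 : (t - s) / t = 1 - l := by rw [hl]; field_simp
  rw [e0] at d2
  obtain ⟨Q, hQ, lawX, lawY, lawZ, oXY, oYZ⟩ := exists_glue hα hP hβ
  have LX := memLp_of_map hα (by fun_prop) lawX
  have LY := memLp_of_map hP (by fun_prop) lawY
  have LZ := memLp_of_map hβ (by fun_prop) lawZ
  have LU : MemLp (fun ω : (H × H) × H => ω.1.1 - ω.1.2) 2 Q := LX.sub LY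
  have LV : MemLp (fun ω : (H × H) × H => ω.1.2 - ω.2) 2 Q := LY.sub LZ
  set D := W2 α β with hD
  have eU : ∫ ω, ‖ω.1.1 - ω.1.2‖ ^ 2 ∂Q = (l * D) ^ 2 := by
    rw [← d1, W2_sq, integral_normsq_sub LX LY, W2sq_eq, ← oXY, ← m2_map (P := Q) (by fun_prop),
      ← m2_map (P := Q) (by fun_prop), lawX, lawY]
  have eV : ∫ ω, ‖ω.1.2 - ω.2‖ ^ 2 ∂Q = ((1 - l) * D) ^ 2 := by
    rw [← d2, W2_sq, integral_normsq_sub LY LZ, W2sq_eq, ← oYZ, ← m2_map (P := Q) (by fun_prop),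
      ← m2_map (P := Q) (by fun_prop), lawY, lawZ]
  set c := ∫ ω, inner ℝ (ω.1.1 - ω.1.2) (ω.1.2 - ω.2) ∂Q with hc
  have g1 := W2sq_le (P := Q) (X := fun ω => ω.1.1) (Y := fun ω => ω.2) (by fun_prop) (by fun_prop)
  rw [lawX, lawZ, ← W2_sq, ← hD] at g1
  have g2 := integral_normsq_add LU LV
  simp only [sub_add_sub_cancel] at g2
  rw [eU, eV, ← hc] at g2
  have g3 := integral_normsq_sub (LU.const_smul (1 - l)) (LV.const_smul l)
  simp only [Pi.smul_apply, inner_smul_left, inner_smul_right, norm_smul, mul_pow,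
    Real.norm_eq_abs, sq_abs, integral_const_mul, conj_trivial] at g3
  rw [eU, eV, ← hc] at g3
  have hll : 0 < l * (1 - l) := mul_pos hl0 (by linarith)
  have g4 : 0 ≤ ∫ ω, ‖(1 - l) • (ω.1.1 - ω.1.2) - l • (ω.1.2 - ω.2)‖ ^ 2 ∂Q :=
    integral_nonneg fun _ => by positivity
  have g5 : l * (1 - l) * D ^ 2 ≤ c := by
    rw [g2] at g1
    linarith
  have g6 : c ≤ l * (1 - l) * D ^ 2 := by
    have : 0 ≤ l * (1 - l) * (l * (1 - l) * D ^ 2 - c) := by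
      rw [g3] at g4
      linarith
    have := nonneg_of_mul_nonneg_right this hll
    linarith
  have hz := ae_eq_zero_of_integral_normsq
    (X := fun ω : (H × H) × H => (1 - l) • (ω.1.1 - ω.1.2) - l • (ω.1.2 - ω.2))
    ((LU.const_smul (1 - l)).sub (LV.const_smul l)) (by
      rw [g3, le_antisymm g6 g5]
      apply le_of_eq
      ring)
  have hcoup : IsCoupling (Q.map fun ω => (ω.1.1, ω.2)) α β := by
    have k := isCoupling_map (P := Q) (X := fun ω => ω.1.1) (Y := fun ω => ω.2)
      (by fun_prop) (by fun_prop)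
    rwa [lawX, lawZ] at k
  have hopt : ∫ p, inner ℝ p.1 p.2 ∂(Q.map fun ω => (ω.1.1, ω.2)) = corr α β := by
    have k := hcoup.cost hα hβ
    rw [integral_map (by fun_prop) (by fun_prop), g2, le_antisymm g6 g5] at k
    have k2 := W2sq_eq α β
    rw [← W2_sq, ← hD] at k2
    linarith
  rw [unique_opt ν hα hβ hac hκ hcoup o hopt, interp, Measure.map_map (by fun_prop) (by fun_prop),
    ← lawY]
  apply Measure.map_congr
  filter_upwards [hz] with ω hω
  simp only [Function.comp_apply]
  rw [← sub_eq_zero, ← neg_eq_zero, ← hω, ← hl]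
  module

end Geodesic

end WExtrap

/-- the metric extrapolation and the (dilated) forward projection lie on a
unique minimizing geodesic starting from `ν₀`. -/
theorem stmt16 {d : ℕ} (hd : 1 ≤ d) (t : ℝ) (ht : 1 < t)
    (θ : ℝ) (hθ : θ = (t - 1) / t)
    (ν₀ ν₁ ρE ρF : Measure (EuclideanSpace ℝ (Fin d)))
    (hν₀ : IsP2 ν₀) (hν₁ : IsP2 ν₁)
    (hν₀ac : ν₀ ≪ (volume : Measure (EuclideanSpace ℝ (Fin d))))
    (hρE : IsMetricExtrap t ν₀ ν₁ ρE)
    (hρF : IsForwardProj (ν₁.map (fun x => (1 / θ) • x)) ν₀ ρF) :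
    ∃ γ : ℝ → Measure (EuclideanSpace ℝ (Fin d)),
      IsGeodesic 0 t γ ∧ γ 0 = ν₀ ∧ γ 1 = ρF.map (fun x => θ • x) ∧ γ t = ρE ∧
      ∀ γ' : ℝ → Measure (EuclideanSpace ℝ (Fin d)),
        IsGeodesic 0 t γ' → γ' 0 = ν₀ → γ' t = ρE →
        ∀ s ∈ Set.Icc (0 : ℝ) t, γ' s = γ s := by
  have ht0 : 0 < t := by linarith
  have ha : 0 < t - 1 := by linarith
  have hθ0 : 0 < θ := by rw [hθ]; positivity
  set μ := ν₁.map (fun x => (1 / θ) • x) with hμdef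
  have hμ : IsP2 μ := WExtrap.isP2_smul hν₁ _
  set σ := ρE.map (fun x => (t - 1)⁻¹ • x) with hσdef
  have hσ : IsP2 σ := WExtrap.isP2_smul hρE.1 _
  have hρ : ρE = σ.map (fun x => (t - 1) • x) := (WExtrap.map_smul_inv ρE ha.ne').symm
  -- the extrapolation functional of a dilated measure is an affine function of the potential
  have hform : ∀ τ, IsP2 τ →
      W2sq (τ.map (fun x => (t - 1) • x)) ν₁ / (2 * (t - 1)) -
        W2sq (τ.map (fun x => (t - 1) • x)) ν₀ / (2 * t) =
      (t - 1) / t * WExtrap.potential ν₀ μ τ +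
        (WExtrap.m2 ν₁ / (2 * (t - 1)) - WExtrap.m2 ν₀ / (2 * t)) := by
    intro τ hτ
    have e : WExtrap.corr τ μ = t / (t - 1) * WExtrap.corr τ ν₁ := by
      rw [WExtrap.corr_comm τ μ, WExtrap.corr_smul hν₁ hτ (by positivity),
        WExtrap.corr_comm τ ν₁, hθ, one_div_div]
    rw [WExtrap.W2sq_eq, WExtrap.W2sq_eq, WExtrap.m2_smul, WExtrap.corr_smul hτ hν₁ ha,
      WExtrap.corr_smul hτ hν₀ ha, WExtrap.potential, e]
    have := ha.ne'
    field_simp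
    ring
  have hG : ∀ τ, IsP2 τ → WExtrap.potential ν₀ μ σ ≤ WExtrap.potential ν₀ μ τ := by
    intro τ hτ
    have h := hρE.2 _ (WExtrap.isP2_smul hτ (t - 1))
    rw [hform τ hτ, hρ, hform σ hσ] at h
    exact le_of_mul_le_mul_left (by linarith) (div_pos ha ht0)
  obtain ⟨κ, hκ, oκ, hρF'⟩ := WExtrap.forward_eq volume hν₀ hν₀ac hμ hσ hG hρF
  have := hκ.1
  have lawX : κ.map (fun p => p.1) = ν₀ := hκ.2.1
  have lawE : κ.map (fun p => (t - 1) • p.2) = ρE := by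
    rw [hρ, ← hκ.2.2, Measure.map_map (by fun_prop) (by fun_prop)]
    rfl
  have hπ : IsCoupling (κ.map fun p => (p.1, (t - 1) • p.2)) ν₀ ρE := by
    have k := WExtrap.isCoupling_map (P := κ) (X := fun p => p.1) (Y := fun p => (t - 1) • p.2)
      (by fun_prop) (by fun_prop)
    rwa [lawX, lawE] at k
  have oπ : ∫ p, inner ℝ p.1 p.2 ∂(κ.map fun p => (p.1, (t - 1) • p.2)) =
      WExtrap.corr ν₀ ρE := by
    rw [integral_map (by fun_prop) (by fun_prop)]
    simp only [inner_smul_right]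
    rw [integral_const_mul, oκ, WExtrap.corr_comm ν₀ ρE, hρ, WExtrap.corr_smul hσ hν₀ ha,
      WExtrap.corr_comm σ ν₀]
  refine ⟨WExtrap.interp (κ.map fun p => (p.1, (t - 1) • p.2)) t,
    WExtrap.interp_isGeodesic hν₀ hρE.1 hπ oπ ht0, WExtrap.interp_zero hπ t, ?_,
    WExtrap.interp_self hπ ht0, fun γ hγ h0 h1 s hs =>
      WExtrap.geodesic_unique volume hν₀ hρE.1 hν₀ac hπ oπ ht0 hγ h0 h1 hs⟩
  rw [hρF', WExtrap.interp, Measure.map_map (by fun_prop) (by fun_prop),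
    Measure.map_map (by fun_prop) (by fun_prop)]
  congr 1
  funext p
  simp only [Function.comp_apply, hθ]
  have e : (t - 1) / t = 1 - 1 / t := by field_simp
  have e2 : (1 / t) • ((t - 1) • p.2) = (1 - 1 / t) • p.2 := by
    rw [smul_smul, ← e]
    congr 1
    ring
  rw [e, smul_sub, e2]
  module

end
end

section
/- Let d ≥ 1, let ρ₀ ∈ P₂(ℝ^d) be absolutely continuous with respect to Lebesgue measure, let μ, μ̃, ν ∈ P₂(ℝ^d), and let X_μ, X_μ̃ ∈ L²(ρ₀) satisfy (X_μ)_#ρ₀ = μ and (X_μ̃)_#ρ₀ = μ̃. If X* minimizes ‖X − X_μ‖_{L²(ρ₀)} over all X ∈ L²(ρ₀) with X_#ρ₀ ⪯ ν, and X̃* minimizes ‖X − X_μ̃‖_{L²(ρ₀)} over the same constraint set, then ‖X* − X̃*‖_{L²(ρ₀)} ≤ ‖X_μ − X_μ̃‖_{L²(ρ₀)} and consequently W₂(X*_#ρ₀, X̃*_#ρ₀) ≤ ‖X_μ − X_μ̃‖_{L²(ρ₀)}. -/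
/-!
Maps `X ∈ L²(ρ₀)` with `X_#ρ₀ ⪯ ν` form a convex subset of the Hilbert space `L²(ρ₀)`, so `X*` and
`X̃*` are metric projections of `X_μ` and `X_μ̃` onto the same convex set, and metric projections in a
Hilbert space are 1-Lipschitz (`norm_sub_le_of_nearest`). The bound on `W₂` follows by using
`(X*, X̃*)_#ρ₀` as a coupling.

Convexity (`convexOrder_map_combo`) is Jensen's inequality `φ(aX + bY) ≤ a φ(X) + b φ(Y)`, except
that `φ(X)` and `φ(Y)` may fail to be integrable even if `φ(aX + bY)` is. Hence `φ` is
approximated from below by maxima of finitely many affine functions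
(`exists_integrable_convex_approx`), which are integrable against every measure with finite second
moment, and dominated convergence gives the inequality for `φ` itself.
-/

open MeasureTheory

noncomputable section

variable {V : Type*} [NormedAddCommGroup V] [NormedSpace ℝ V]
  [MeasurableSpace V] [BorelSpace V]

/-- Metric projection onto a convex set of a Hilbert space is non-expansive. -/
theorem norm_sub_le_of_nearest {H : Type*} [NormedAddCommGroup H] [InnerProductSpace ℝ H]
    {K : Set H} (hK : Convex ℝ K) {u v p q : H} (hp : p ∈ K) (hq : q ∈ K)
    (hpmin : ∀ w ∈ K, ‖u - p‖ ≤ ‖u - w‖) (hqmin : ∀ w ∈ K, ‖v - q‖ ≤ ‖v - w‖) :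
    ‖p - q‖ ≤ ‖u - v‖ := by
  have key : ∀ {u p : H}, p ∈ K → (∀ w ∈ K, ‖u - p‖ ≤ ‖u - w‖) →
      ∀ w ∈ K, inner ℝ (u - p) (w - p) ≤ 0 := by
    intro u p hp hmin
    refine (norm_eq_iInf_iff_real_inner_le_zero hK hp).1 (le_antisymm ?_ ?_)
    · have : Nonempty K := ⟨⟨p, hp⟩⟩
      exact le_ciInf fun w => hmin w w.2
    · exact ciInf_le (f := fun w : K => ‖u - w‖)
        ⟨0, by rintro _ ⟨w, rfl⟩; exact norm_nonneg _⟩ ⟨p, hp⟩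
  have h1 := key hp hpmin q hq
  have h2 := key hq hqmin p hp
  have h3 : inner ℝ (u - p) (q - p) + inner ℝ (v - q) (p - q)
      = ‖p - q‖ ^ 2 - inner ℝ (u - v) (p - q) := by
    rw [← real_inner_self_eq_norm_sq, ← neg_sub p q, inner_neg_right]
    simp only [inner_sub_left]
    ring
  have h4 := real_inner_le_norm (u - v) (p - q)
  rcases (norm_nonneg (p - q)).eq_or_lt with h | h
  · rw [← h]; exact norm_nonneg _
  · exact le_of_mul_le_mul_right (by nlinarith) h

/-- A convex function on `ℝ^d` is the pointwise limit, from below, of convex functions that are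
integrable against every measure with finite second moment. -/
theorem exists_integrable_convex_approx {d : ℕ} {φ : EuclideanSpace ℝ (Fin d) → ℝ}
    (hφ : ConvexOn ℝ Set.univ φ) :
    ∃ ψ : ℕ → EuclideanSpace ℝ (Fin d) → ℝ,
      (∀ n, ConvexOn ℝ Set.univ (ψ n)) ∧ (∀ n ρ, IsP2 ρ → Integrable (ψ n) ρ) ∧
      (∀ n x, ψ 0 x ≤ ψ n x) ∧ (∀ n x, ψ n x ≤ φ x) ∧
      ∀ x, Filter.Tendsto (fun n => ψ n x) Filter.atTop (nhds (φ x)) := by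
  have hc : Continuous φ := continuousOn_univ.1 (hφ.continuousOn isOpen_univ)
  obtain ⟨l, c, hle, hsup⟩ := hφ.real_univ_sSup_of_nat_affine_eq hc.lowerSemicontinuous
  let f : ℕ → EuclideanSpace ℝ (Fin d) → ℝ := fun i x => l i x + c i
  have hfle : ∀ i, f i ≤ φ := hle
  have hfsup : ∀ x, ⨆ i, f i x = φ x := fun x => by
    rw [← hsup, iSup_apply]; rfl
  refine ⟨fun n => partialSups f n, fun n => ?_, fun n ρ hρ => ?_, fun n x => ?_, fun n x => ?_,
    fun x => ?_⟩
  · have hf : ∀ i, ConvexOn ℝ Set.univ (f i) := fun i =>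
      ((l i).toLinearMap.convexOn convex_univ).add_const (c i)
    induction n with
    | zero => simpa using hf 0
    | succ n ih => beta_reduce; rw [partialSups_add_one]; exact ih.sup (hf _)
  · have := hρ.1
    have hid : Integrable (fun x => x) ρ :=
      MemLp.integrable (q := 2) (by norm_num)
        ((memLp_two_iff_integrable_sq_norm aestronglyMeasurable_id).2 hρ.2)
    have hf : ∀ i, Integrable (f i) ρ := fun i =>
      ((l i).integrable_comp hid).add (integrable_const _)
    induction n with
    | zero => simpa using hf 0
    | succ n ih => beta_reduce; rw [partialSups_add_one]; exact ih.sup (hf _)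
  · exact (partialSups f).monotone (Nat.zero_le n) x
  · exact partialSups_le f n φ (fun i _ => hfle i) x
  · have hmono : Monotone fun n => partialSups f n x := fun m n h => (partialSups f).monotone h x
    have hbdd : BddAbove (Set.range fun n => partialSups f n x) :=
      ⟨φ x, by rintro _ ⟨n, rfl⟩; exact partialSups_le f n φ (fun i _ => hfle i) x⟩
    have h := tendsto_atTop_ciSup hmono hbdd
    convert h using 2
    refine le_antisymm ?_ (ciSup_le fun n => partialSups_le f n φ (fun i _ => hfle i) x)
    rw [← hfsup x]
    exact ciSup_mono hbdd fun i => le_partialSups f i x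

theorem isP2_map {d : ℕ} {ρ₀ : Measure (EuclideanSpace ℝ (Fin d))} [IsProbabilityMeasure ρ₀]
    {X : EuclideanSpace ℝ (Fin d) → EuclideanSpace ℝ (Fin d)} (hX : MemL2 ρ₀ X) :
    IsP2 (ρ₀.map X) :=
  ⟨Measure.isProbabilityMeasure_map hX.1.aemeasurable,
    (integrable_map_measure (by fun_prop) hX.1.aemeasurable).2 hX.2⟩

theorem memL2_iff {d : ℕ} {ρ₀ : Measure (EuclideanSpace ℝ (Fin d))}
    {X : EuclideanSpace ℝ (Fin d) → EuclideanSpace ℝ (Fin d)} (hX : Measurable X) :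
    MemL2 ρ₀ X ↔ MemLp X 2 ρ₀ := by
  rw [memLp_two_iff_integrable_sq_norm hX.aestronglyMeasurable]
  exact ⟨fun h => h.2, fun h => ⟨hX, h⟩⟩

/-- The constraint `X_#ρ₀ ⪯ ν` is convex in `X`. -/
theorem convexOrder_map_combo {d : ℕ} {ρ₀ ν : Measure (EuclideanSpace ℝ (Fin d))}
    [IsProbabilityMeasure ρ₀] (hν : IsP2 ν)
    {X Y : EuclideanSpace ℝ (Fin d) → EuclideanSpace ℝ (Fin d)}
    (hX : MemL2 ρ₀ X) (hY : MemL2 ρ₀ Y)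
    (hXν : ConvexOrder (ρ₀.map X) ν) (hYν : ConvexOrder (ρ₀.map Y) ν)
    {a b : ℝ} (ha : 0 ≤ a) (hb : 0 ≤ b) (hab : a + b = 1) :
    ConvexOrder (ρ₀.map fun x => a • X x + b • Y x) ν := by
  have hZm : Measurable fun x => a • X x + b • Y x := (hX.1.const_smul a).add (hY.1.const_smul b)
  have hZ : MemL2 ρ₀ fun x => a • X x + b • Y x :=
    (memL2_iff hZm).2
      ((((memL2_iff hX.1).1 hX).const_smul a).add (((memL2_iff hY.1).1 hY).const_smul b))
  intro φ hφ hφZ hφν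
  obtain ⟨ψ, hψc, hψi, hψ0, hψle, hψt⟩ := exists_integrable_convex_approx hφ
  have hψZ := fun n => hψi n _ (isP2_map hZ)
  have hlim : Filter.Tendsto (fun n => ∫ z, ψ n z ∂(ρ₀.map fun x => a • X x + b • Y x))
      Filter.atTop (nhds (∫ z, φ z ∂(ρ₀.map fun x => a • X x + b • Y x))) := by
    refine tendsto_integral_of_dominated_convergence (fun z => |φ z| + |ψ 0 z|)
      (fun n => (hψZ n).aestronglyMeasurable) (hφZ.abs.add (hψZ 0).abs)
      (fun n => Filter.Eventually.of_forall fun z => ?_) (Filter.Eventually.of_forall hψt)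
    rw [Real.norm_eq_abs, abs_le]
    have := hψ0 n z
    have := hψle n z
    have := neg_abs_le (ψ 0 z)
    have := le_abs_self (φ z)
    have := abs_nonneg (ψ 0 z)
    have := abs_nonneg (φ z)
    constructor <;> linarith
  refine le_of_tendsto' hlim fun n => ?_
  have hiX := hψi n _ (isP2_map hX)
  have hiY := hψi n _ (isP2_map hY)
  have hX' := hXν (ψ n) (hψc n) hiX (hψi n ν hν)
  have hY' := hYν (ψ n) (hψc n) hiY (hψi n ν hν)
  have hνn : ∫ x, ψ n x ∂ν ≤ ∫ x, φ x ∂ν := integral_mono (hψi n ν hν) hφν (hψle n)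
  rw [integral_map hX.1.aemeasurable hiX.aestronglyMeasurable] at hX'
  rw [integral_map hY.1.aemeasurable hiY.aestronglyMeasurable] at hY'
  rw [integral_map hZm.aemeasurable (hψZ n).aestronglyMeasurable]
  have hjX : Integrable (fun x => ψ n (X x)) ρ₀ := hiX.comp_measurable hX.1
  have hjY : Integrable (fun x => ψ n (Y x)) ρ₀ := hiY.comp_measurable hY.1
  calc ∫ x, ψ n (a • X x + b • Y x) ∂ρ₀
      ≤ ∫ x, (a * ψ n (X x) + b * ψ n (Y x)) ∂ρ₀ :=
        integral_mono ((hψZ n).comp_measurable hZm) ((hjX.const_mul a).add (hjY.const_mul b))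
          fun x => (hψc n).2 trivial trivial ha hb hab
    _ = a * ∫ x, ψ n (X x) ∂ρ₀ + b * ∫ x, ψ n (Y x) ∂ρ₀ := by
        rw [integral_add (hjX.const_mul a) (hjY.const_mul b), integral_const_mul,
          integral_const_mul]
    _ ≤ a * ∫ x, φ x ∂ν + b * ∫ x, φ x ∂ν := by
        gcongr <;> linarith
    _ = ∫ x, φ x ∂ν := by rw [← add_mul, hab, one_mul]

theorem norm_toLp_sub_eq_sqrt {d : ℕ} {ρ₀ : Measure (EuclideanSpace ℝ (Fin d))}
    {X Y : EuclideanSpace ℝ (Fin d) → EuclideanSpace ℝ (Fin d)}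
    (hX : MemLp X 2 ρ₀) (hY : MemLp Y 2 ρ₀) :
    ‖hX.toLp X - hY.toLp Y‖ = √(∫ x, ‖X x - Y x‖ ^ 2 ∂ρ₀) := by
  rw [← MemLp.toLp_sub, ← Real.sqrt_sq (norm_nonneg ((hX.sub hY).toLp (X - Y))),
    ← real_inner_self_eq_norm_sq, L2.inner_def]
  congr 1
  refine integral_congr_ae ?_
  filter_upwards [(hX.sub hY).coeFn_toLp] with x hx
  rw [hx, real_inner_self_eq_norm_sq]
  rfl

/-- The joint law of `(X, Y)` is a competitor in the definition of `W₂`. -/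
theorem W2_map_le {d : ℕ} {ρ₀ : Measure (EuclideanSpace ℝ (Fin d))} [IsProbabilityMeasure ρ₀]
    {X Y : EuclideanSpace ℝ (Fin d) → EuclideanSpace ℝ (Fin d)}
    (hX : Measurable X) (hY : Measurable Y) :
    W2 (ρ₀.map X) (ρ₀.map Y) ≤ √(∫ x, ‖X x - Y x‖ ^ 2 ∂ρ₀) := by
  refine Real.sqrt_le_sqrt (csInf_le ⟨0, ?_⟩
    ⟨ρ₀.map fun x => (X x, Y x), ⟨?_, ?_, ?_⟩, ?_⟩)
  · rintro _ ⟨π, -, rfl⟩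
    exact integral_nonneg fun p => by positivity
  · exact Measure.isProbabilityMeasure_map (hX.prodMk hY).aemeasurable
  · rw [Measure.map_map measurable_fst (hX.prodMk hY)]; rfl
  · rw [Measure.map_map measurable_snd (hX.prodMk hY)]; rfl
  · rw [integral_map (hX.prodMk hY).aemeasurable]
    exact Continuous.aestronglyMeasurable (by fun_prop)

/-- the lifted backward projection is non-expansive in `L²(ρ₀)`. -/
theorem stmt17 {d : ℕ} (hd : 1 ≤ d)
    (ρ₀ μ μ' ν : Measure (EuclideanSpace ℝ (Fin d)))
    (hρ₀ : IsP2 ρ₀) (hac : ρ₀ ≪ (volume : Measure (EuclideanSpace ℝ (Fin d))))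
    (hμ : IsP2 μ) (hμ' : IsP2 μ') (hν : IsP2 ν)
    (Xμ Xμ' Xs Xs' : EuclideanSpace ℝ (Fin d) → EuclideanSpace ℝ (Fin d))
    (hXμ : MemL2 ρ₀ Xμ) (hXμpush : ρ₀.map Xμ = μ)
    (hXμ' : MemL2 ρ₀ Xμ') (hXμ'push : ρ₀.map Xμ' = μ')
    (hXs : MemL2 ρ₀ Xs) (hXsadm : ConvexOrder (ρ₀.map Xs) ν)
    (hXsmin : ∀ X : EuclideanSpace ℝ (Fin d) → EuclideanSpace ℝ (Fin d), MemL2 ρ₀ X → ConvexOrder (ρ₀.map X) ν →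
      ∫ x, ‖Xs x - Xμ x‖ ^ 2 ∂ρ₀ ≤ ∫ x, ‖X x - Xμ x‖ ^ 2 ∂ρ₀)
    (hXs' : MemL2 ρ₀ Xs') (hXs'adm : ConvexOrder (ρ₀.map Xs') ν)
    (hXs'min : ∀ X : EuclideanSpace ℝ (Fin d) → EuclideanSpace ℝ (Fin d), MemL2 ρ₀ X → ConvexOrder (ρ₀.map X) ν →
      ∫ x, ‖Xs' x - Xμ' x‖ ^ 2 ∂ρ₀ ≤ ∫ x, ‖X x - Xμ' x‖ ^ 2 ∂ρ₀) :
    Real.sqrt (∫ x, ‖Xs x - Xs' x‖ ^ 2 ∂ρ₀) ≤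
      Real.sqrt (∫ x, ‖Xμ x - Xμ' x‖ ^ 2 ∂ρ₀) ∧
    W2 (ρ₀.map Xs) (ρ₀.map Xs') ≤ Real.sqrt (∫ x, ‖Xμ x - Xμ' x‖ ^ 2 ∂ρ₀) := by
  have := hρ₀.1
  have mμ := (memL2_iff hXμ.1).1 hXμ
  have mμ' := (memL2_iff hXμ'.1).1 hXμ'
  have ms := (memL2_iff hXs.1).1 hXs
  have ms' := (memL2_iff hXs'.1).1 hXs'
  -- `K` consists of the classes having some admissible Borel representative.
  let K : Set (Lp (EuclideanSpace ℝ (Fin d)) 2 ρ₀) :=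
    {f | ∃ (X : EuclideanSpace ℝ (Fin d) → EuclideanSpace ℝ (Fin d)) (h : MemLp X 2 ρ₀),
      Measurable X ∧ ConvexOrder (ρ₀.map X) ν ∧ h.toLp X = f}
  have hK : Convex ℝ K := by
    rintro _ ⟨X, hX, hXm, hXν, rfl⟩ _ ⟨Y, hY, hYm, hYν, rfl⟩ a b ha hb hab
    exact ⟨fun x => a • X x + b • Y x, (hX.const_smul a).add (hY.const_smul b),
      (hXm.const_smul a).add (hYm.const_smul b),
      convexOrder_map_combo hν ((memL2_iff hXm).2 hX) ((memL2_iff hYm).2 hY) hXν hYν ha hb hab,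
      rfl⟩
  have main : √(∫ x, ‖Xs x - Xs' x‖ ^ 2 ∂ρ₀) ≤ √(∫ x, ‖Xμ x - Xμ' x‖ ^ 2 ∂ρ₀) := by
    rw [← norm_toLp_sub_eq_sqrt ms ms', ← norm_toLp_sub_eq_sqrt mμ mμ']
    refine norm_sub_le_of_nearest hK ⟨Xs, ms, hXs.1, hXsadm, rfl⟩
      ⟨Xs', ms', hXs'.1, hXs'adm, rfl⟩ ?_ ?_
    · rintro _ ⟨X, hX, hXm, hXν, rfl⟩
      rw [norm_sub_rev, norm_sub_rev _ (hX.toLp X), norm_toLp_sub_eq_sqrt, norm_toLp_sub_eq_sqrt]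
      exact Real.sqrt_le_sqrt (hXsmin X ((memL2_iff hXm).2 hX) hXν)
    · rintro _ ⟨X, hX, hXm, hXν, rfl⟩
      rw [norm_sub_rev, norm_sub_rev _ (hX.toLp X), norm_toLp_sub_eq_sqrt, norm_toLp_sub_eq_sqrt]
      exact Real.sqrt_le_sqrt (hXs'min X ((memL2_iff hXm).2 hX) hXν)
  exact ⟨main, (W2_map_le hXs.1 hXs'.1).trans main⟩

end
end
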